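/- arXiv:2503.08383 — 2 statements merged into one kernel-verified Lean document; each statement's English description precedes it below -/
import Mathlib

section
/- Let p > 1, let R > ρ > 0 with R ≥ ρ + ((2n−1)ρ/4)^{1/3} and R ≥ β(p,n) ρ, where β(p,n) is the constant of the torus superharmonicity result (β(p,n) = max{ (2n+p−2)/(p−1), (2n−p+1)/(2(2−p)) } if 1 < p < 2; 2n if p = 2; 2n+p−2 if p ≥ (13+√(32n−7))/8; 1 + 1/a(p,n) otherwise, a(p,n) the positive root of (2n+p−3)² a² + 4( (p−2)(2n+p−3) + (p−1)(2n−1) ) a − 4(2p−3) = 0). Let T = {(x,y,t) ∈ ℍⁿ : (r−R)² + t² < ρ²} and d(ξ) = ρ − √((r−R)² + t²). Then the infimum over nonzero u ∈ C_c^∞(T) of ∫_T |∇_{ℍⁿ}u|^p dξ / ∫_T (|∇_{ℍⁿ}d|^p / d^p) |u|^p dξ equals ((p−1)/p)^p. -/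
/-!
Let `s = √((r-R)² + t²)`, so that `d = ρ - s`.

*Lower bound.* Off the core `{r = R, t = 0}` the horizontal divergence of the field
`V = |∇_H d|^{p-2}∇_H d` is nonpositive. Both `d` and `|∇_H d|` depend on `(r, t)` only, and in the
`(r, t)` half-plane the claim becomes an identity (`planar_div_nonpos`) whose terms are nonnegative as
soon as `4r³ + (2n-1)(r-R) ≥ 0` and `r + (2n+p-3)(r-R) ≥ 0`. The first follows from the cubic condition
on `R`, the second from `R ≥ (2n+p-2)ρ`, which holds because `β(p,n) ≥ 2n+p-2` (`beta_ge`). As `V` is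
a combination, with coefficients depending on `(r, t)`, of the dilation field `(x, y, 0)`, the rotation
field `(y, -x, 0)` and `∂_t`, the weak form (`weak_super`) needs only integration by parts against
linear weights. Testing it with `χ(d)|u|^p d^{1-p}`, where `χ` cuts off a neighbourhood of the core,
and applying Young's inequality pointwise (`hardy_pointwise`) gives Hardy's inequality: the term with
`χ'` has a favourable sign, so the cutoff can be removed by dominated convergence, and the core is a
null set (`hardy`).

*Sharpness.* For `u = d^{(p-1)/p} ψ(log d / L)` with a fixed bump function `ψ`, both integrals become
integrals of `κ(d)|∇_H d|^p` with `κ` a function of one variable. These are comparable to `∫ κ` with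
constants independent of `κ` (`coarea`), by the divergence theorem for the field
`r^{1-2n}((r-R)∂_r + t∂_t)` and the two-sided bounds on `|∇_H d|`. On the logarithmic scale the
denominator is at least a multiple of `L`, while the part of the numerator that carries `ψ'` is at most
a multiple of `L^{1-p}`. The remaining part is `((p-1)/p)^p` times the denominator, and a convexity
inequality separates the two parts at the cost of a factor arbitrarily close to `1`. Letting `L → ∞`
shows that the constant cannot be improved (`sharp`).
-/

open MeasureTheory Real Set Filter

noncomputable section

/-- A point of the Heisenberg group ℍⁿ: ξ = (x, y, t). -/
abbrev Hpt (n : ℕ) : Type := (Fin n → ℝ) × (Fin n → ℝ) × ℝ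

namespace Heis

variable {n : ℕ}

/-- Group multiplication on ℍⁿ. -/
def hmul (ξ η : Hpt n) : Hpt n :=
  (ξ.1 + η.1, ξ.2.1 + η.2.1,
    ξ.2.2 + η.2.2 + 2 * ∑ i, (ξ.1 i * η.2.1 i - ξ.2.1 i * η.1 i))

/-- Group inverse on ℍⁿ. -/
def hinv (ξ : Hpt n) : Hpt n := (-ξ.1, -ξ.2.1, -ξ.2.2)

/-- The gauge (Korányi) quasi-norm N(ξ) = ((|x|²+|y|²)² + t²)^{1/4}. -/
def gaugeN (ξ : Hpt n) : ℝ :=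
  (((∑ i, ξ.1 i ^ 2) + ∑ i, ξ.2.1 i ^ 2) ^ 2 + ξ.2.2 ^ 2) ^ ((1 : ℝ) / 4)

/-- r(ξ) = √(|x|² + |y|²). -/
def rr (ξ : Hpt n) : ℝ := Real.sqrt ((∑ i, ξ.1 i ^ 2) + ∑ i, ξ.2.1 i ^ 2)

/-- The Euclidean inner product on ℝ^{2n+1}. -/
def ip (ν ξ : Hpt n) : ℝ :=
  (∑ i, ν.1 i * ξ.1 i) + (∑ i, ν.2.1 i * ξ.2.1 i) + ν.2.2 * ξ.2.2

/-- X_i u (ξ) = ∂u/∂x_i + 2 y_i ∂u/∂t at ξ. -/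
def XD (u : Hpt n → ℝ) (ξ : Hpt n) (i : Fin n) : ℝ :=
  fderiv ℝ u ξ (Pi.single i 1, 0, 2 * ξ.2.1 i)

/-- Y_i u (ξ) = ∂u/∂y_i − 2 x_i ∂u/∂t at ξ. -/
def YD (u : Hpt n → ℝ) (ξ : Hpt n) (i : Fin n) : ℝ :=
  fderiv ℝ u ξ (0, Pi.single i 1, -(2 * ξ.1 i))

/-- |∇_{ℍⁿ} u|(ξ). -/
def hgradNorm (u : Hpt n → ℝ) (ξ : Hpt n) : ℝ :=
  Real.sqrt (∑ i, (XD u ξ i ^ 2 + YD u ξ i ^ 2))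

/-- ∇_{ℍⁿ}u · ∇_{ℍⁿ}v at ξ. -/
def hdot (u v : Hpt n → ℝ) (ξ : Hpt n) : ℝ :=
  ∑ i, (XD u ξ i * XD v ξ i + YD u ξ i * YD v ξ i)

/-- The horizontal p-Laplacian, pointwise:
Δ_{p,ℍⁿ}d = Σ_i [X_i(|∇_{ℍⁿ}d|^{p−2} X_i d) + Y_i(|∇_{ℍⁿ}d|^{p−2} Y_i d)]. -/
def pLap (p : ℝ) (d : Hpt n → ℝ) (ξ : Hpt n) : ℝ :=
  ∑ i, (XD (fun η => hgradNorm d η ^ (p - 2) * XD d η i) ξ i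
      + YD (fun η => hgradNorm d η ^ (p - 2) * YD d η i) ξ i)

/-- u ∈ C_c^∞(Ω). -/
def IsTest (Ω : Set (Hpt n)) (u : Hpt n → ℝ) : Prop :=
  ContDiff ℝ (⊤ : ℕ∞) u ∧ HasCompactSupport u ∧ tsupport u ⊆ Ω

/-- Gauge pseudodistance of ξ to the set B: inf_{b ∈ B} N(b⁻¹ξ). -/
def distN (B : Set (Hpt n)) (ξ : Hpt n) : ℝ :=
  ⨅ b : B, gaugeN (hmul (hinv (b : Hpt n)) ξ)

/-- Distance of ξ to the set B induced by the quasi-norm ccρ: inf_{b ∈ B} ccρ(b⁻¹ξ). -/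
def distCC (ccρ : Hpt n → ℝ) (B : Set (Hpt n)) (ξ : Hpt n) : ℝ :=
  ⨅ b : B, ccρ (hmul (hinv (b : Hpt n)) ξ)

/-- ξ' is a nearest point of B to ξ for the distance induced by ccρ. -/
def nearestCC (ccρ : Hpt n → ℝ) (B : Set (Hpt n)) (ξ' ξ : Hpt n) : Prop :=
  ξ' ∈ B ∧ ccρ (hmul (hinv ξ') ξ) = distCC ccρ B ξ

/-- Characterization of the Carnot–Carathéodory distance to the origin on ℍⁿ:
ρ(ξ) = (φ/sin φ)·r with φ ∈ [0,π) determined by (2φ−sin 2φ)/(2sin²φ) = |t|/r² when r ≠ 0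
(interpreting φ/sin φ as 1 when t = 0, i.e. φ = 0), and ρ(ξ) = √(π|t|) when r = 0. -/
def IsCCNorm (ccρ : Hpt n → ℝ) : Prop :=
  (∀ ξ : Hpt n, rr ξ = 0 → ccρ ξ = Real.sqrt (π * |ξ.2.2|)) ∧
  (∀ ξ : Hpt n, rr ξ ≠ 0 → ξ.2.2 = 0 → ccρ ξ = rr ξ) ∧
  (∀ ξ : Hpt n, rr ξ ≠ 0 → ξ.2.2 ≠ 0 → ∀ φ : ℝ, 0 < φ → φ < π →
    (2 * φ - Real.sin (2 * φ)) / (2 * Real.sin φ ^ 2) = |ξ.2.2| / rr ξ ^ 2 →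
    ccρ ξ = (φ / Real.sin φ) * rr ξ)

end Heis

namespace TorusHardy
open Heis Topology

/-! ### Integration by parts on the Heisenberg group -/

section parts
variable {n : ℕ}

/-- Two nested product measures; the instance for products is not found by unification through
the abbreviation `Hpt`. -/
instance isAddHaarMeasure_Hpt : (volume : Measure (Hpt n)).IsAddHaarMeasure := by
  have h : (volume : Measure ((Fin n → ℝ) × ℝ)).IsAddHaarMeasure :=
    Measure.prod.instIsAddHaarMeasure _ _
  exact Measure.prod.instIsAddHaarMeasure (volume : Measure (Fin n → ℝ)) _

lemma integrable_of_C {f : Hpt n → ℝ} (hf : Continuous f) (hc : HasCompactSupport f) :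
    Integrable f := hf.integrable_of_hasCompactSupport hc

lemma continuous_fderiv_app {H : Hpt n → ℝ} (hH : ContDiff ℝ 1 H) {v : Hpt n → Hpt n}
    (hv : Continuous v) : Continuous (fun ξ => fderiv ℝ H ξ (v ξ)) :=
  (hH.continuous_fderiv one_ne_zero).clm_apply hv

lemma compact_fderiv_app {H : Hpt n → ℝ} (hc : HasCompactSupport H) (v : Hpt n → Hpt n) :
    HasCompactSupport (fun ξ => fderiv ℝ H ξ (v ξ)) := by
  refine (hc.fderiv (𝕜 := ℝ)).mono ?_
  intro ξ h
  simp only [Function.mem_support] at h ⊢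
  intro h0
  apply h
  simp [h0]

lemma integrable_fderiv_app {H : Hpt n → ℝ} (hH : ContDiff ℝ 1 H) (hc : HasCompactSupport H)
    {v : Hpt n → Hpt n} (hv : Continuous v) : Integrable (fun ξ => fderiv ℝ H ξ (v ξ)) :=
  integrable_of_C (continuous_fderiv_app hH hv) (compact_fderiv_app hc v)

/-- Integration by parts against a linear weight. -/
lemma integral_linear_mul_fderiv {H : Hpt n → ℝ} (hH : ContDiff ℝ 1 H) (hc : HasCompactSupport H)
    (ℓ : Hpt n →L[ℝ] ℝ) (v : Hpt n) :
    ∫ ξ, ℓ ξ * fderiv ℝ H ξ v = - (ℓ v * ∫ ξ, H ξ) := by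
  have hd := hH.differentiable one_ne_zero
  rw [integral_mul_fderiv_eq_neg_fderiv_mul_of_integrable]
  · simp only [ContinuousLinearMap.fderiv]
    rw [integral_const_mul]
  · simp only [ContinuousLinearMap.fderiv]
    exact (integrable_of_C hH.continuous hc).const_mul _
  · exact integrable_of_C (ℓ.continuous.mul (continuous_fderiv_app hH continuous_const))
      ((compact_fderiv_app hc (fun _ => v)).mul_left)
  · exact integrable_of_C (ℓ.continuous.mul hH.continuous) hc.mul_left
  · exact fun x _ => ℓ.differentiableAt
  · exact fun x _ => hd x

lemma integral_fderiv_t {H : Hpt n → ℝ} (hH : ContDiff ℝ 1 H) (hc : HasCompactSupport H) :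
    ∫ ξ, fderiv ℝ H ξ (0, 0, 1) = 0 := by
  have h := integral_mul_fderiv_eq_neg_fderiv_mul_of_integrable (μ := volume)
    (f := fun _ : Hpt n => (1 : ℝ)) (g := H) (v := ((0, 0, 1) : Hpt n)) (by simp)
    (by simpa using integrable_fderiv_app hH hc continuous_const)
    (by simpa using integrable_of_C hH.continuous hc) (fun x _ => by fun_prop)
    (fun x _ => hH.differentiable one_ne_zero x)
  simpa using h

/-- The coordinate functional `ξ ↦ x_i`. -/
def xc (i : Fin n) : Hpt n →L[ℝ] ℝ :=
  (ContinuousLinearMap.proj i).comp (ContinuousLinearMap.fst ℝ (Fin n → ℝ) ((Fin n → ℝ) × ℝ))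

/-- The coordinate functional `ξ ↦ y_i`. -/
def yc (i : Fin n) : Hpt n →L[ℝ] ℝ :=
  (ContinuousLinearMap.proj i).comp ((ContinuousLinearMap.fst ℝ (Fin n → ℝ) ℝ).comp
    (ContinuousLinearMap.snd ℝ (Fin n → ℝ) ((Fin n → ℝ) × ℝ)))

@[simp] lemma xc_apply (i : Fin n) (ξ : Hpt n) : xc i ξ = ξ.1 i := rfl

@[simp] lemma yc_apply (i : Fin n) (ξ : Hpt n) : yc i ξ = ξ.2.1 i := rfl

/-- The coordinate vector `∂/∂x_i`. -/
def ex (i : Fin n) : Hpt n := (Pi.single i 1, 0, 0)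

/-- The coordinate vector `∂/∂y_i`. -/
def ey (i : Fin n) : Hpt n := (0, Pi.single i 1, 0)

lemma hor_decomp (a b : Fin n → ℝ) (c : ℝ) :
    ((a, b, c) : Hpt n) = (∑ i, (a i • ex i + b i • ey i)) + c • ((0, 0, 1) : Hpt n) := by
  refine Prod.ext ?_ (Prod.ext ?_ ?_)
  · ext j
    simp [Prod.fst_sum, ex, ey, Finset.sum_apply, Pi.single_apply]
  · ext j
    simp [Prod.fst_sum, Prod.snd_sum, ex, ey, Finset.sum_apply, Pi.single_apply]
  · simp [Prod.snd_sum, ex, ey]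

lemma clm_decomp (L : Hpt n →L[ℝ] ℝ) (a b : Fin n → ℝ) (c : ℝ) :
    L (a, b, c) = (∑ i, (a i * L (ex i) + b i * L (ey i))) + c * L (0, 0, 1) := by
  rw [hor_decomp a b c, map_add, map_sum, map_smul]
  simp only [map_add, map_smul, smul_eq_mul]

/-- The field `(x, y, 0)` has Euclidean divergence `2n`. -/
lemma integral_fderiv_dil {H : Hpt n → ℝ} (hH : ContDiff ℝ 1 H) (hc : HasCompactSupport H) :
    ∫ ξ, fderiv ℝ H ξ (ξ.1, ξ.2.1, 0) = - (2 * n * ∫ ξ, H ξ) := by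
  have hpt : ∀ ξ : Hpt n, fderiv ℝ H ξ (ξ.1, ξ.2.1, 0) =
      ∑ i, (ξ.1 i * fderiv ℝ H ξ (ex i) + ξ.2.1 i * fderiv ℝ H ξ (ey i)) := by
    intro ξ
    rw [clm_decomp, zero_mul, add_zero]
  simp_rw [hpt]
  rw [integral_finsetSum]
  · have : ∀ i : Fin n, ∫ ξ : Hpt n, (ξ.1 i * fderiv ℝ H ξ (ex i) + ξ.2.1 i * fderiv ℝ H ξ (ey i))
        = - (2 * ∫ ξ, H ξ) := by
      intro i
      rw [integral_add]
      · have h1 := integral_linear_mul_fderiv hH hc (xc i) (ex i)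
        have h2 := integral_linear_mul_fderiv hH hc (yc i) (ey i)
        simp only [xc_apply, yc_apply] at h1 h2
        rw [h1, h2]
        simp [ex, ey]
        ring
      all_goals
        refine integrable_of_C (.mul (by fun_prop) (continuous_fderiv_app hH continuous_const))
          ((compact_fderiv_app hc (fun _ => _)).mul_left)
    simp_rw [this]
    simp
    ring
  · intro i _
    refine .add ?_ ?_ <;>
    exact integrable_of_C (.mul (by fun_prop) (continuous_fderiv_app hH continuous_const))
          ((compact_fderiv_app hc (fun _ => _)).mul_left)

/-- The field `(y, -x, 0)` is divergence free. -/
lemma integral_fderiv_rot {H : Hpt n → ℝ} (hH : ContDiff ℝ 1 H) (hc : HasCompactSupport H) :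
    ∫ ξ, fderiv ℝ H ξ (ξ.2.1, -ξ.1, 0) = 0 := by
  have hpt : ∀ ξ : Hpt n, fderiv ℝ H ξ (ξ.2.1, -ξ.1, 0) =
      ∑ i, (ξ.2.1 i * fderiv ℝ H ξ (ex i) + -(ξ.1 i * fderiv ℝ H ξ (ey i))) := by
    intro ξ
    rw [clm_decomp, zero_mul, add_zero]
    simp
  simp_rw [hpt]
  rw [integral_finsetSum]
  · refine Finset.sum_eq_zero fun i _ => ?_
    rw [integral_add, integral_neg]
    · have h1 := integral_linear_mul_fderiv hH hc (yc i) (ex i)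
      have h2 := integral_linear_mul_fderiv hH hc (xc i) (ey i)
      simp only [xc_apply, yc_apply] at h1 h2
      rw [h1, h2]
      simp [ex, ey]
    · exact integrable_of_C (.mul (by fun_prop) (continuous_fderiv_app hH continuous_const))
          ((compact_fderiv_app hc (fun _ => _)).mul_left)
    · exact (integrable_of_C (.mul (by fun_prop) (continuous_fderiv_app hH continuous_const))
          ((compact_fderiv_app hc (fun _ => _)).mul_left)).neg
  · intro i _
    refine .add ?_ (.neg ?_) <;>
    exact integrable_of_C (.mul (by fun_prop) (continuous_fderiv_app hH continuous_const))
          ((compact_fderiv_app hc (fun _ => _)).mul_left)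

end parts

/-! ### The radius `r` and functions of `(r, t)` -/

section geometry
variable {n : ℕ}

/-- The differential of `r` away from `r = 0`. -/
def rrD (ξ : Hpt n) : Hpt n →L[ℝ] ℝ :=
  (rr ξ)⁻¹ • ∑ i, (ξ.1 i • xc i + ξ.2.1 i • yc i)

/-- The coordinate functional `ξ ↦ t`. -/
def tD : Hpt n →L[ℝ] ℝ :=
  (ContinuousLinearMap.snd ℝ (Fin n → ℝ) ℝ).comp
    (ContinuousLinearMap.snd ℝ (Fin n → ℝ) ((Fin n → ℝ) × ℝ))

@[simp] lemma tD_apply (v : Hpt n) : tD v = v.2.2 := rfl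

lemma rr_nonneg (ξ : Hpt n) : 0 ≤ rr ξ := Real.sqrt_nonneg _

lemma rr_sq (ξ : Hpt n) : rr ξ ^ 2 = ∑ i, (ξ.1 i ^ 2 + ξ.2.1 i ^ 2) := by
  unfold rr
  rw [Real.sq_sqrt (add_nonneg (Finset.sum_nonneg fun _ _ => sq_nonneg _)
    (Finset.sum_nonneg fun _ _ => sq_nonneg _)), Finset.sum_add_distrib]

lemma continuous_rr : Continuous (rr : Hpt n → ℝ) := by
  unfold rr; fun_prop

lemma contDiffAt_rr {m : WithTop ℕ∞} {ξ : Hpt n} (h : 0 < rr ξ) : ContDiffAt ℝ m (rr : Hpt n → ℝ) ξ := by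
  unfold rr
  have : (∑ i, ξ.1 i ^ 2) + ∑ i, ξ.2.1 i ^ 2 ≠ 0 := (Real.sqrt_pos.1 h).ne'
  refine ContDiffAt.sqrt ?_ this
  refine ContDiff.contDiffAt ?_
  fun_prop

lemma hasFDerivAt_rr {ξ : Hpt n} (h : 0 < rr ξ) : HasFDerivAt (rr : Hpt n → ℝ) (rrD ξ) ξ := by
  have hx : ∀ i : Fin n, HasFDerivAt (fun ξ : Hpt n => ξ.1 i) (xc i) ξ :=
    fun i => (xc i).hasFDerivAt
  have hy : ∀ i : Fin n, HasFDerivAt (fun ξ : Hpt n => ξ.2.1 i) (yc i) ξ :=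
    fun i => (yc i).hasFDerivAt
  have h0 : (∑ i, ξ.1 i ^ 2) + ∑ i, ξ.2.1 i ^ 2 ≠ 0 := (Real.sqrt_pos.1 h).ne'
  have := ((HasFDerivAt.fun_sum (u := Finset.univ) fun i _ => (hx i).pow 2).add
    (HasFDerivAt.fun_sum (u := Finset.univ) fun i _ => (hy i).pow 2)).sqrt h0
  refine this.congr_fderiv ?_
  ext v <;>
  · simp [rrD, rr, Finset.mul_sum, Finset.sum_add_distrib]
    try ring_nf

lemma hasFDerivAt_t (ξ : Hpt n) : HasFDerivAt (fun ξ : Hpt n => ξ.2.2) tD ξ :=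
  (tD (n := n)).hasFDerivAt

lemma rrD_dil {ξ : Hpt n} (h : 0 < rr ξ) : rrD ξ (ξ.1, ξ.2.1, 0) = rr ξ := by
  have := rr_sq ξ
  simp only [rrD, smul_apply, sum_apply,
    add_apply, xc_apply, yc_apply, smul_eq_mul]
  simp only [← pow_two]
  rw [← this]
  field_simp

lemma rrD_apply (ξ v : Hpt n) : rrD ξ v = (rr ξ)⁻¹ * ∑ i, (ξ.1 i * v.1 i + ξ.2.1 i * v.2.1 i) := by
  simp [rrD]

lemma rrD_rot (ξ : Hpt n) (c : ℝ) : rrD ξ (ξ.2.1, -ξ.1, c) = 0 := by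
  rw [rrD_apply]
  have : ∀ i : Fin n, ξ.1 i * ξ.2.1 i + ξ.2.1 i * (-ξ.1) i = 0 := by
    intro i; simp; ring
  simp only [this]; simp

/-- Chain rule for a function of `(r, t)`. -/
lemma hasFDerivAt_rt {F : ℝ × ℝ → ℝ} {F' : ℝ × ℝ →L[ℝ] ℝ} {ξ : Hpt n} (h : 0 < rr ξ)
    (hF : HasFDerivAt F F' (rr ξ, ξ.2.2)) :
    HasFDerivAt (fun η : Hpt n => F (rr η, η.2.2)) (F' (1, 0) • rrD ξ + F' (0, 1) • tD) ξ := by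
  have h1 : HasFDerivAt (fun η : Hpt n => (rr η, η.2.2)) ((rrD ξ).prod tD) ξ :=
    (hasFDerivAt_rr h).prodMk (hasFDerivAt_t ξ)
  refine (HasFDerivAt.comp ξ hF h1).congr_fderiv ?_
  refine ContinuousLinearMap.ext fun v => ?_
  have : ((rrD ξ v, tD v) : ℝ × ℝ) = rrD ξ v • ((1 : ℝ), (0 : ℝ)) + tD v • ((0 : ℝ), (1 : ℝ)) := by
    simp
  simp only [ContinuousLinearMap.comp_apply, ContinuousLinearMap.prod_apply, this, map_add,
    map_smul, add_apply, smul_apply, smul_eq_mul]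
  ring

end geometry

/-! ### The field `|∇_H d|^{p-2}∇_H d` in the `(r, t)` half-plane -/

section planar

/-- `(r-R)² + 4r²t² = s²|∇_H d|²`, where `s² = SS` and `z = (r, t)`. -/
def WW (R : ℝ) (z : ℝ × ℝ) : ℝ := (z.1 - R) ^ 2 + 4 * z.1 ^ 2 * z.2 ^ 2

/-- The squared distance `s² = (r-R)² + t²` from `z = (r, t)` to the centre `(R, 0)`. -/
def SS (R : ℝ) (z : ℝ × ℝ) : ℝ := (z.1 - R) ^ 2 + z.2 ^ 2

/-- `|∇_H d|^{p-2}/s`. -/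
def KK (p R : ℝ) (z : ℝ × ℝ) : ℝ := WW R z ^ ((p - 2) / 2) * SS R z ^ (-(p - 1) / 2)

/-- The coefficient of the dilation field `(x, y, 0)` in `|∇_H d|^{p-2}∇_H d`. -/
def AA (p R : ℝ) (z : ℝ × ℝ) : ℝ := -(KK p R z * (z.1 - R) / z.1)

/-- The coefficient of the rotation field `(y, -x, 0)` in `|∇_H d|^{p-2}∇_H d`. -/
def BB (p R : ℝ) (z : ℝ × ℝ) : ℝ := -(2 * KK p R z * z.2)

/-- The `∂/∂t` component of `|∇_H d|^{p-2}∇_H d`. It is determined by `BB`: the combination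
`∑ (b y_i X_i - b x_i Y_i)` has `∂/∂t` component `2 b r²`. -/
def CC (p R : ℝ) (z : ℝ × ℝ) : ℝ := 2 * z.1 ^ 2 * BB p R z

lemma WW_pos {R : ℝ} {z : ℝ × ℝ} (hr : 0 < z.1) (hs : 0 < SS R z) : 0 < WW R z := by
  unfold SS at hs
  unfold WW
  by_cases h : z.2 = 0
  · rw [h] at hs ⊢
    nlinarith
  · have : 0 < z.2 ^ 2 := by positivity
    positivity

lemma contDiffAt_KK {p R : ℝ} {z : ℝ × ℝ} (hr : 0 < z.1) (hs : 0 < SS R z) :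
    ContDiffAt ℝ 1 (KK p R) z := by
  unfold KK
  have hW := WW_pos hr hs
  refine ContDiffAt.mul (ContDiffAt.rpow_const_of_ne ?_ hW.ne') (ContDiffAt.rpow_const_of_ne ?_ hs.ne')
  · unfold WW; exact ContDiff.contDiffAt (by fun_prop)
  · unfold SS; exact ContDiff.contDiffAt (by fun_prop)

lemma contDiffAt_AA {p R : ℝ} {z : ℝ × ℝ} (hr : 0 < z.1) (hs : 0 < SS R z) :
    ContDiffAt ℝ 1 (AA p R) z := by
  unfold AA
  exact (((contDiffAt_KK hr hs).mul (by fun_prop)).div contDiffAt_fst hr.ne').neg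

lemma contDiffAt_BB {p R : ℝ} {z : ℝ × ℝ} (hr : 0 < z.1) (hs : 0 < SS R z) :
    ContDiffAt ℝ 1 (BB p R) z := by
  unfold BB
  exact ((contDiffAt_const.mul (contDiffAt_KK hr hs)).mul (by fun_prop)).neg

lemma contDiffAt_CC {p R : ℝ} {z : ℝ × ℝ} (hr : 0 < z.1) (hs : 0 < SS R z) :
    ContDiffAt ℝ 1 (CC p R) z := by
  unfold CC
  exact ContDiffAt.mul (by fun_prop) (contDiffAt_BB hr hs)

lemma hasDerivAt_KK_r {p R r t : ℝ} (hr : 0 < r) (hs : 0 < SS R (r, t)) :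
    HasDerivAt (fun x => KK p R (x, t)) (KK p R (r, t) *
      ((p - 2) / 2 * (2 * (r - R) + 8 * r * t ^ 2) / WW R (r, t)
        + (-(p - 1) / 2) * (2 * (r - R)) / SS R (r, t))) r := by
  have hW : 0 < WW R (r, t) := WW_pos (z := (r, t)) hr hs
  have h1 : HasDerivAt (fun x => WW R (x, t)) (2 * (r - R) + 8 * r * t ^ 2) r := by
    unfold WW
    have := (((hasDerivAt_id r).sub_const R).pow 2).add
      ((((hasDerivAt_id r).pow 2).const_mul 4).mul_const (t ^ 2))
    refine this.congr_deriv ?_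
    simp only [id, Nat.cast_ofNat, show (2 - 1 : ℕ) = 1 from rfl, pow_one]
    ring
  have h2 : HasDerivAt (fun x => SS R (x, t)) (2 * (r - R)) r := by
    unfold SS
    have := (((hasDerivAt_id r).sub_const R).pow 2).add_const (t ^ 2)
    refine this.congr_deriv ?_
    simp
  have := (h1.rpow_const (p := (p - 2) / 2) (Or.inl hW.ne')).mul
    (h2.rpow_const (p := -(p - 1) / 2) (Or.inl hs.ne'))
  refine this.congr_deriv ?_
  rw [Real.rpow_sub_one hW.ne', Real.rpow_sub_one hs.ne']
  unfold KK
  field_simp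

lemma hasDerivAt_KK_t {p R r t : ℝ} (hr : 0 < r) (hs : 0 < SS R (r, t)) :
    HasDerivAt (fun x => KK p R (r, x)) (KK p R (r, t) *
      ((p - 2) / 2 * (8 * r ^ 2 * t) / WW R (r, t)
        + (-(p - 1) / 2) * (2 * t) / SS R (r, t))) t := by
  have hW : 0 < WW R (r, t) := WW_pos (z := (r, t)) hr hs
  have h1 : HasDerivAt (fun x => WW R (r, x)) (8 * r ^ 2 * t) t := by
    unfold WW
    have := (((hasDerivAt_id t).pow 2).const_mul (4 * r ^ 2)).const_add ((r - R) ^ 2)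
    refine this.congr_deriv ?_
    simp; ring
  have h2 : HasDerivAt (fun x => SS R (r, x)) (2 * t) t := by
    unfold SS
    have := ((hasDerivAt_id t).pow 2).const_add ((r - R) ^ 2)
    refine this.congr_deriv ?_
    simp
  have := (h1.rpow_const (p := (p - 2) / 2) (Or.inl hW.ne')).mul
    (h2.rpow_const (p := -(p - 1) / 2) (Or.inl hs.ne'))
  refine this.congr_deriv ?_
  rw [Real.rpow_sub_one hW.ne', Real.rpow_sub_one hs.ne']
  unfold KK
  field_simp

/-- In the `(r, t)` half-plane the horizontal divergence of `|∇_H d|^{p-2}∇_H d` is nonpositive: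
up to the factor `-K/(r W s²)` it equals
`s²((r-R)²(4r³ + (2m-1)(r-R)) + 4r²t²(r + (2m+p-3)(r-R))) + (p-1)r(1-4r²)²(r-R)²t²`. -/
lemma planar_div_nonpos {p R r t m : ℝ} (hp : 1 < p) (hr : 0 < r) (hs : 0 < SS R (r, t))
    (h1 : 0 ≤ 4 * r ^ 3 + (2 * m - 1) * (r - R)) (h2 : 0 ≤ r + (2 * m + p - 3) * (r - R)) :
    2 * m * AA p R (r, t) + r * (fderiv ℝ (AA p R) (r, t) (1, 0)) +
      fderiv ℝ (CC p R) (r, t) (0, 1) ≤ 0 := by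
  have hW : 0 < WW R (r, t) := WW_pos (z := (r, t)) hr hs
  have hA : HasDerivAt (fun x => AA p R (x, t)) (fderiv ℝ (AA p R) (r, t) (1, 0)) r := by
    have h := ((contDiffAt_AA (p := p) (z := (r, t)) hr hs).differentiableAt one_ne_zero).hasFDerivAt
    exact h.comp_hasDerivAt r ((hasDerivAt_id r).prodMk (hasDerivAt_const r t))
  have hC : HasDerivAt (fun x => CC p R (r, x)) (fderiv ℝ (CC p R) (r, t) (0, 1)) t := by
    have h := ((contDiffAt_CC (p := p) (z := (r, t)) hr hs).differentiableAt one_ne_zero).hasFDerivAt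
    exact h.comp_hasDerivAt t ((hasDerivAt_const t r).prodMk (hasDerivAt_id t))
  have hA' := (((hasDerivAt_KK_r (p := p) hr hs).mul ((hasDerivAt_id r).sub_const R)).div
    (hasDerivAt_id r) hr.ne').neg
  have hC' := (((hasDerivAt_KK_t (p := p) hr hs).const_mul 2).mul (hasDerivAt_id t)).neg.const_mul
    (2 * r ^ 2)
  rw [hA.unique hA', hC.unique hC']
  have hK : 0 < KK p R (r, t) := by unfold KK; positivity
  have key : 0 ≤ SS R (r, t) * ((r - R) ^ 2 * (4 * r ^ 3 + (2 * m - 1) * (r - R))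
      + 4 * r ^ 2 * t ^ 2 * (r + (2 * m + p - 3) * (r - R)))
      + (p - 1) * r * (1 - 4 * r ^ 2) ^ 2 * (r - R) ^ 2 * t ^ 2 := by
    have : 0 < p - 1 := by linarith
    positivity
  have e : ∀ x : ℝ, x = -(KK p R (r, t) / (r * WW R (r, t) * SS R (r, t))) *
      (SS R (r, t) * ((r - R) ^ 2 * (4 * r ^ 3 + (2 * m - 1) * (r - R))
      + 4 * r ^ 2 * t ^ 2 * (r + (2 * m + p - 3) * (r - R)))
      + (p - 1) * r * (1 - 4 * r ^ 2) ^ 2 * (r - R) ^ 2 * t ^ 2) → x ≤ 0 := by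
    intro x hx
    rw [hx]
    have : 0 ≤ KK p R (r, t) / (r * WW R (r, t) * SS R (r, t)) := by positivity
    nlinarith [mul_nonneg this key]
  apply e
  unfold AA
  simp only [id, Pi.mul_apply]
  field_simp
  unfold WW SS
  ring

end planar

/-! ### Superharmonicity of `d` off the core -/

section field
variable {n : ℕ}

/-- The projection `ξ ↦ (r, t)` to the half-plane. -/
def pt (ξ : Hpt n) : ℝ × ℝ := (rr ξ, ξ.2.2)

/-- The punctured torus `T` minus its core `{r = R, t = 0}`, where `d` is not differentiable. -/
def SSet (n : ℕ) (R ρ : ℝ) : Set (Hpt n) := {ξ | 0 < SS R (pt ξ) ∧ SS R (pt ξ) < ρ ^ 2}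

/-- Euclidean components of the horizontal field `|∇_H d|^{p-2}∇_H d`. -/
def VV (p R : ℝ) (ξ : Hpt n) : Hpt n :=
  (AA p R (pt ξ) • ξ.1 + BB p R (pt ξ) • ξ.2.1, AA p R (pt ξ) • ξ.2.1 - BB p R (pt ξ) • ξ.1,
    CC p R (pt ξ))

lemma continuous_pt : Continuous (pt : Hpt n → ℝ × ℝ) :=
  continuous_rr.prodMk (by fun_prop)

lemma continuous_SS (R : ℝ) : Continuous (SS R) := by unfold SS; fun_prop

lemma isOpen_SSet (R ρ : ℝ) : IsOpen (SSet n R ρ) := by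
  have := (continuous_SS R).comp (continuous_pt (n := n))
  exact (isOpen_lt continuous_const this).inter (isOpen_lt this continuous_const)

lemma rr_pos_of_SS {R ρ : ℝ} (hρ : 0 < ρ) {ξ : Hpt n} (h : SS R (pt ξ) < ρ ^ 2) :
    R - ρ < rr ξ ∧ rr ξ < R + ρ := by
  have h' : (rr ξ - R) ^ 2 < ρ ^ 2 := by
    have : SS R (pt ξ) = (rr ξ - R) ^ 2 + ξ.2.2 ^ 2 := rfl
    nlinarith [sq_nonneg ξ.2.2]
  have := abs_lt_of_sq_lt_sq h' hρ.le
  rw [abs_lt] at this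
  constructor <;> linarith

lemma contDiff_of_tsupport {m : WithTop ℕ∞} {f : Hpt n → ℝ}
    (h : ∀ x ∈ tsupport f, ContDiffAt ℝ m f x) : ContDiff ℝ m f := by
  rw [contDiff_iff_contDiffAt]
  intro x
  by_cases hx : x ∈ tsupport f
  · exact h x hx
  · exact contDiffAt_const.congr_of_eventuallyEq (notMem_tsupport_iff_eventuallyEq.1 hx)

lemma contDiffAt_pt {m : WithTop ℕ∞} {ξ : Hpt n} (h : 0 < rr ξ) : ContDiffAt ℝ m (pt : Hpt n → ℝ × ℝ) ξ :=
  (contDiffAt_rr h).prodMk (by fun_prop)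

/-- The product of a compactly supported `C¹` function `w` and a function of `(r, t)` that is `C¹`
on the support of `w`. -/
lemma mul_pt {w : Hpt n → ℝ} (hw : ContDiff ℝ 1 w) (hc : HasCompactSupport w) {F : ℝ × ℝ → ℝ}
    (h : ∀ ξ ∈ tsupport w, 0 < rr ξ ∧ ContDiffAt ℝ 1 F (pt ξ)) :
    ContDiff ℝ 1 (fun ξ => w ξ * F (pt ξ)) ∧ HasCompactSupport (fun ξ => w ξ * F (pt ξ)) := by
  refine ⟨contDiff_of_tsupport fun ξ hξ => ?_, hc.mul_right⟩
  have hξ' : ξ ∈ tsupport w := tsupport_mul_subset_left hξ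
  exact hw.contDiffAt.mul ((h ξ hξ').2.comp ξ (contDiffAt_pt (h ξ hξ').1))

lemma fderiv_mul_pt {w : Hpt n → ℝ} (hw : ContDiff ℝ 1 w) {F : ℝ × ℝ → ℝ} {ξ : Hpt n}
    (hr : 0 < rr ξ) (hF : ContDiffAt ℝ 1 F (pt ξ)) (v : Hpt n) :
    fderiv ℝ (fun ξ => w ξ * F (pt ξ)) ξ v = F (pt ξ) * fderiv ℝ w ξ v +
      w ξ * (fderiv ℝ F (pt ξ) (1, 0) * rrD ξ v + fderiv ℝ F (pt ξ) (0, 1) * v.2.2) := by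
  have h1 := ((hw.differentiable one_ne_zero) ξ).hasFDerivAt
  have h2 := hasFDerivAt_rt hr (hF.differentiableAt one_ne_zero).hasFDerivAt
  have := h1.fun_mul h2
  rw [show (fun ξ => w ξ * F (pt ξ)) = (fun ξ => w ξ * F (rr ξ, ξ.2.2)) from rfl,
    HasFDerivAt.fderiv this]
  simp [pt]
  ring

lemma VV_decomp (L : Hpt n →L[ℝ] ℝ) (p R : ℝ) (ξ : Hpt n) :
    L (VV p R ξ) = AA p R (pt ξ) * L (ξ.1, ξ.2.1, 0) + BB p R (pt ξ) * L (ξ.2.1, -ξ.1, 0)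
      + CC p R (pt ξ) * L (0, 0, 1) := by
  have : VV p R ξ = AA p R (pt ξ) • ((ξ.1, ξ.2.1, 0) : Hpt n) +
      BB p R (pt ξ) • ((ξ.2.1, -ξ.1, 0) : Hpt n) + CC p R (pt ξ) • ((0, 0, 1) : Hpt n) := by
    refine Prod.ext ?_ (Prod.ext ?_ ?_)
    · simp [VV]
    · simp [VV, sub_eq_add_neg]
    · simp [VV]
  rw [this, map_add, map_add, map_smul, map_smul, map_smul]
  simp

/-- Weak superharmonicity of `d` off the core: the directional derivative of a nonnegative test
function along `VV` dominates a function of zero integral. -/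
lemma weak_super {p R ρ : ℝ} (hp : 1 < p) (hρ : 0 < ρ) (hR : ρ < R)
    (h1 : (2 * (n : ℝ) - 1) * ρ ≤ 4 * (R - ρ) ^ 3) (h2 : (2 * (n : ℝ) + p - 2) * ρ ≤ R) (hn : 1 ≤ n)
    {w : Hpt n → ℝ} (hw : ContDiff ℝ 1 w) (hc : HasCompactSupport w)
    (hsub : tsupport w ⊆ SSet n R ρ) (hw0 : ∀ ξ, 0 ≤ w ξ) :
    ∃ g : Hpt n → ℝ, Integrable g ∧ ∫ ξ, g ξ = 0 ∧ (∀ ξ, g ξ ≤ fderiv ℝ w ξ (VV p R ξ)) ∧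
      ∀ ξ ∉ SSet n R ρ, g ξ = 0 := by
  have hn' : (1 : ℝ) ≤ n := by exact_mod_cast hn
  have hr : ∀ ξ ∈ SSet n R ρ, 0 < rr ξ := fun ξ hξ => by
    have := (rr_pos_of_SS hρ hξ.2).1
    linarith
  obtain ⟨a1, a2⟩ := mul_pt hw hc (F := AA p R) fun ξ hξ =>
    ⟨hr ξ (hsub hξ), contDiffAt_AA (hr ξ (hsub hξ)) (hsub hξ).1⟩
  obtain ⟨b1, b2⟩ := mul_pt hw hc (F := BB p R) fun ξ hξ =>
    ⟨hr ξ (hsub hξ), contDiffAt_BB (hr ξ (hsub hξ)) (hsub hξ).1⟩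
  obtain ⟨c1, c2⟩ := mul_pt hw hc (F := CC p R) fun ξ hξ =>
    ⟨hr ξ (hsub hξ), contDiffAt_CC (hr ξ (hsub hξ)) (hsub hξ).1⟩
  set HA : Hpt n → ℝ := fun ξ => w ξ * AA p R (pt ξ) with hHA
  set HB : Hpt n → ℝ := fun ξ => w ξ * BB p R (pt ξ) with hHB
  set HC : Hpt n → ℝ := fun ξ => w ξ * CC p R (pt ξ) with hHC
  have i0 : Integrable HA := integrable_of_C a1.continuous a2
  have i1 : Integrable (fun ξ => fderiv ℝ HA ξ (ξ.1, ξ.2.1, 0)) :=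
    integrable_fderiv_app a1 a2 (by fun_prop)
  have i2 : Integrable (fun ξ => fderiv ℝ HB ξ (ξ.2.1, -ξ.1, 0)) :=
    integrable_fderiv_app b1 b2 (by fun_prop)
  have i3 : Integrable (fun ξ => fderiv ℝ HC ξ (0, 0, 1)) :=
    integrable_fderiv_app c1 c2 (by fun_prop)
  have off : ∀ ξ ∉ tsupport w, w ξ = 0 ∧ fderiv ℝ w ξ = 0 ∧ fderiv ℝ HA ξ = 0 ∧
      fderiv ℝ HB ξ = 0 ∧ fderiv ℝ HC ξ = 0 := by
    intro ξ hξ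
    exact ⟨image_eq_zero_of_notMem_tsupport hξ, fderiv_of_notMem_tsupport ℝ hξ,
      fderiv_of_notMem_tsupport ℝ fun h => hξ (tsupport_mul_subset_left h),
      fderiv_of_notMem_tsupport ℝ fun h => hξ (tsupport_mul_subset_left h),
      fderiv_of_notMem_tsupport ℝ fun h => hξ (tsupport_mul_subset_left h)⟩
  refine ⟨fun ξ => 2 * n * HA ξ + fderiv ℝ HA ξ (ξ.1, ξ.2.1, 0) +
    fderiv ℝ HB ξ (ξ.2.1, -ξ.1, 0) + fderiv ℝ HC ξ (0, 0, 1),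
    (((i0.const_mul _).add i1).add i2).add i3, ?_, ?_, ?_⟩
  · have j1 := integral_add ((i0.const_mul (2 * (n : ℝ))).add i1 |>.add i2) i3
    have j2 := integral_add ((i0.const_mul (2 * (n : ℝ))).add i1) i2
    have j3 := integral_add (i0.const_mul (2 * (n : ℝ))) i1
    simp only [Pi.add_apply] at j1 j2
    rw [j1, j2, j3, integral_const_mul, integral_fderiv_dil a1 a2, integral_fderiv_rot b1 b2,
      integral_fderiv_t c1 c2]
    ring
  · intro ξ
    by_cases hξ : ξ ∈ tsupport w
    · have hS := hsub hξ
      have hrr := hr ξ hS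
      have hb := rr_pos_of_SS hρ hS.2
      have fa := fderiv_mul_pt hw hrr (contDiffAt_AA (p := p) hrr hS.1) (ξ.1, ξ.2.1, 0)
      have fb := fderiv_mul_pt hw hrr (contDiffAt_BB (p := p) hrr hS.1) (ξ.2.1, -ξ.1, 0)
      have fc := fderiv_mul_pt hw hrr (contDiffAt_CC (p := p) hrr hS.1) (0, 0, 1)
      have hz : rrD ξ (0, 0, 1) = 0 := by rw [rrD_apply]; simp
      rw [rrD_dil hrr] at fa
      rw [rrD_rot] at fb
      rw [hz] at fc
      rw [VV_decomp]
      have e1 : 0 ≤ 4 * rr ξ ^ 3 + (2 * (n : ℝ) - 1) * (rr ξ - R) := by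
        have : (R - ρ) ^ 3 ≤ rr ξ ^ 3 := pow_le_pow_left₀ (by linarith) hb.1.le 3
        nlinarith
      have e2 : 0 ≤ rr ξ + (2 * (n : ℝ) + p - 3) * (rr ξ - R) := by
        nlinarith
      have hd := planar_div_nonpos (p := p) (R := R) (r := rr ξ) (t := ξ.2.2) (m := n) hp hrr hS.1
        e1 e2
      have := mul_nonneg (hw0 ξ) (neg_nonneg.2 hd)
      simp only [hHA, hHB, hHC]
      rw [fa, fb, fc]
      simp only [pt] at this ⊢
      linarith
    · obtain ⟨o1, o2, o3, o4, o5⟩ := off ξ hξ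
      simp only [o2, o3, o4, o5]
      simp [hHA, o1]
  · intro ξ hξ
    obtain ⟨o1, o2, o3, o4, o5⟩ := off ξ (fun h => hξ (hsub h))
    simp only [o3, o4, o5]
    simp [hHA, o1]

end field

/-! ### The constants -/

section constants

/-- In each of the four ranges of `p` the constant `β(p,n)` is at least `2n+p-2`, the only lower
bound that the argument uses. For the quadratic this says that its positive root is at most
`1/(2n+p-3)`. -/
lemma beta_ge {n p β : ℝ} (hn : 1 ≤ n) (hp : 1 < p)
    (hβ : (p < 2 ∧
        β = max ((2 * n + p - 2) / (p - 1)) ((2 * n - p + 1) / (2 * (2 - p)))) ∨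
      (p = 2 ∧ β = 2 * n) ∨
      ((13 + Real.sqrt (32 * n - 7)) / 8 ≤ p ∧ β = 2 * n + p - 2) ∨
      (2 < p ∧ p < (13 + Real.sqrt (32 * n - 7)) / 8 ∧
        ∃ a : ℝ, 0 < a ∧
          (2 * n + p - 3) ^ 2 * a ^ 2 +
              4 * ((p - 2) * (2 * n + p - 3) + (p - 1) * (2 * n - 1)) * a -
              4 * (2 * p - 3) = 0 ∧
          β = 1 + 1 / a)) : 2 * n + p - 2 ≤ β := by
  rcases hβ with ⟨h, rfl⟩ | ⟨rfl, rfl⟩ | ⟨_, rfl⟩ | ⟨h1, h2, a, ha, hq, rfl⟩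
  · refine le_trans ?_ (le_max_left _ _)
    rw [le_div_iff₀ (by linarith)]
    nlinarith
  · linarith
  · exact le_rfl
  · have hM : 0 < 2 * n + p - 3 := by linarith
    -- the quadratic is positive at `1 / (2n + p - 3)`, so its positive root lies to the left
    have h3 : (8 * p - 13) ^ 2 < 32 * n - 7 := by
      have : 8 * p - 13 < Real.sqrt (32 * n - 7) := by linarith
      exact (Real.lt_sqrt (by linarith)).1 this
    have key : a * (2 * n + p - 3) ≤ 1 := by
      by_contra hc
      push Not at hc
      set M := 2 * n + p - 3
      have e : (a * M) ^ 2 + 4 * (p - 2) * (a * M) + 4 * (p - 1) * (2 * n - 1) * a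
        - 4 * (2 * p - 3) = 0 := by rw [← hq]; ring
      have e1 : 1 < (a * M) ^ 2 := by nlinarith
      have e2 : 4 * (p - 2) ≤ 4 * (p - 2) * (a * M) := by nlinarith
      have e3 : 4 * (p - 1) * (2 * n - 1) * a < 4 * p - 5 := by linarith
      have e4 : 4 * (p - 1) * (2 * n - 1) * (a * M) < (4 * p - 5) * M := by nlinarith
      have e5 : 4 * (p - 1) * (2 * n - 1) ≤ 4 * (p - 1) * (2 * n - 1) * (a * M) := by
        have : 0 ≤ 4 * (p - 1) * (2 * n - 1) := by
          apply mul_nonneg <;> linarith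
        nlinarith
      have : M = 2 * n + p - 3 := rfl
      rw [this] at e4
      nlinarith
    have : 2 * n + p - 3 ≤ 1 / a := by
      rw [le_div_iff₀ ha]; linarith
    linarith

/-- The first condition on `R`, cubed. -/
lemma cube_bound {n R ρ : ℝ} (hn : 1 ≤ n) (hρ : 0 < ρ)
    (h : ρ + ((2 * n - 1) * ρ / 4) ^ ((1 : ℝ) / 3) ≤ R) :
    (2 * n - 1) * ρ ≤ 4 * (R - ρ) ^ 3 := by
  have h0 : 0 ≤ (2 * n - 1) * ρ / 4 := by
    have : 0 ≤ 2 * n - 1 := by linarith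
    positivity
  have h1 : ((2 * n - 1) * ρ / 4) ^ ((1 : ℝ) / 3) ≤ R - ρ := by linarith
  have h2 := pow_le_pow_left₀ (Real.rpow_nonneg h0 _) h1 3
  rw [← Real.rpow_natCast, ← Real.rpow_mul h0] at h2
  norm_num at h2
  linarith

end constants

/-! ### The horizontal gradient of `d` -/

section distance
variable {n : ℕ}

/-- The distance `d = ρ - s` to the boundary of the torus. -/
def dd (R ρ : ℝ) (ξ : Hpt n) : ℝ := ρ - √(SS R (pt ξ))

/-- `|∇_H d|` as a function of `(r, t)`, off the core. -/
def GG (R : ℝ) (z : ℝ × ℝ) : ℝ := √(WW R z / SS R z)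

lemma GG_pos {R : ℝ} {z : ℝ × ℝ} (hr : 0 < z.1) (hs : 0 < SS R z) : 0 < GG R z :=
  Real.sqrt_pos.2 (div_pos (WW_pos hr hs) hs)

lemma continuous_dd (R ρ : ℝ) : Continuous (dd R ρ : Hpt n → ℝ) := by
  have := (continuous_SS R).comp (continuous_pt (n := n))
  unfold dd
  exact continuous_const.sub this.sqrt

lemma hasFDerivAt_dd {R ρ : ℝ} {ξ : Hpt n} (hr : 0 < rr ξ) (hs : 0 < SS R (pt ξ)) :
    HasFDerivAt (dd R ρ : Hpt n → ℝ)
      (-((√(SS R (pt ξ)))⁻¹ • ((rr ξ - R) • rrD ξ + ξ.2.2 • tD))) ξ := by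
  have h := ((((hasFDerivAt_rr hr).sub_const R).pow 2).add ((hasFDerivAt_t ξ).pow 2)).sqrt
    (by simpa [SS, pt] using hs.ne')
  refine (h.const_sub ρ).congr_fderiv ?_
  refine ContinuousLinearMap.ext fun v => ?_
  simp [SS, pt]
  ring

lemma XD_dd {R ρ : ℝ} {ξ : Hpt n} (hr : 0 < rr ξ) (hs : 0 < SS R (pt ξ)) (i : Fin n) :
    XD (dd R ρ) ξ i = -((√(SS R (pt ξ)))⁻¹ *
      ((rr ξ - R) / rr ξ * ξ.1 i + 2 * ξ.2.2 * ξ.2.1 i)) := by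
  unfold XD
  rw [(hasFDerivAt_dd hr hs).fderiv]
  simp [rrD_apply, Pi.single_apply]
  ring

lemma YD_dd {R ρ : ℝ} {ξ : Hpt n} (hr : 0 < rr ξ) (hs : 0 < SS R (pt ξ)) (i : Fin n) :
    YD (dd R ρ) ξ i = -((√(SS R (pt ξ)))⁻¹ *
      ((rr ξ - R) / rr ξ * ξ.2.1 i - 2 * ξ.2.2 * ξ.1 i)) := by
  unfold YD
  rw [(hasFDerivAt_dd hr hs).fderiv]
  simp [rrD_apply, Pi.single_apply]
  ring

lemma sum_rot_sq (ξ : Hpt n) (A B : ℝ) :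
    ∑ i, ((A * ξ.1 i + B * ξ.2.1 i) ^ 2 + (A * ξ.2.1 i - B * ξ.1 i) ^ 2)
      = (A ^ 2 + B ^ 2) * rr ξ ^ 2 := by
  rw [rr_sq, Finset.mul_sum]
  exact Finset.sum_congr rfl fun i _ => by ring

lemma hgradNorm_dd {R ρ : ℝ} {ξ : Hpt n} (hr : 0 < rr ξ) (hs : 0 < SS R (pt ξ)) :
    hgradNorm (dd R ρ) ξ = GG R (pt ξ) := by
  unfold hgradNorm GG
  congr 1
  have : ∀ i, XD (dd R ρ) ξ i ^ 2 + YD (dd R ρ) ξ i ^ 2 = (SS R (pt ξ))⁻¹ *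
      (((rr ξ - R) / rr ξ * ξ.1 i + 2 * ξ.2.2 * ξ.2.1 i) ^ 2 +
        ((rr ξ - R) / rr ξ * ξ.2.1 i - 2 * ξ.2.2 * ξ.1 i) ^ 2) := by
    intro i
    rw [XD_dd hr hs, YD_dd hr hs, neg_sq, neg_sq, mul_pow, mul_pow, inv_pow, Real.sq_sqrt hs.le]
    ring
  rw [Finset.sum_congr rfl fun i _ => this i, ← Finset.mul_sum, sum_rot_sq]
  unfold WW
  simp only [pt]
  field_simp
  ring

/-- Chain rule for the horizontal gradient of a function of `d`. -/
lemma hgradNorm_comp_dd {R ρ : ℝ} {ξ : Hpt n} (hr : 0 < rr ξ) (hs : 0 < SS R (pt ξ)) {f : ℝ → ℝ}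
    {f' : ℝ} (hf : HasDerivAt f f' (dd R ρ ξ)) :
    hgradNorm (fun η => f (dd R ρ η)) ξ = |f'| * GG R (pt ξ) := by
  have h := hf.comp_hasFDerivAt ξ (hasFDerivAt_dd hr hs)
  have e : fderiv ℝ (fun η => f (dd R ρ η)) ξ = f' • fderiv ℝ (dd R ρ : Hpt n → ℝ) ξ := by
    rw [(hasFDerivAt_dd hr hs).fderiv]; exact h.fderiv
  rw [← hgradNorm_dd hr hs (ρ := ρ), ← Real.sqrt_sq_eq_abs]
  unfold hgradNorm
  rw [← Real.sqrt_mul (sq_nonneg _), Finset.mul_sum]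
  congr 1
  refine Finset.sum_congr rfl fun i _ => ?_
  simp only [XD, YD, e, smul_apply, smul_eq_mul]
  ring

lemma KK_eq {p R : ℝ} {z : ℝ × ℝ} (hr : 0 < z.1) (hs : 0 < SS R z) :
    KK p R z = GG R z ^ (p - 2) / √(SS R z) := by
  have hW := WW_pos hr hs
  unfold KK GG
  rw [Real.sqrt_eq_rpow, ← Real.rpow_mul (by positivity), Real.div_rpow hW.le hs.le,
    Real.sqrt_eq_rpow, div_div, ← Real.rpow_add hs, div_eq_mul_inv (WW R z ^ _),
    ← Real.rpow_neg hs.le (1 / 2 * (p - 2) + 1 / 2)]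
  ring_nf

lemma KK_mul_sqrt_WW {p R : ℝ} {z : ℝ × ℝ} (hr : 0 < z.1) (hs : 0 < SS R z) :
    KK p R z * √(WW R z) = GG R z ^ (p - 1) := by
  have hG := GG_pos hr hs
  rw [KK_eq hr hs, show p - 1 = (p - 2) + 1 by ring, Real.rpow_add_one hG.ne', div_mul_eq_mul_div,
    mul_div_assoc, ← Real.sqrt_div' _ hs.le]
  rfl

/-- `VV` is horizontal: `VV u = ∑ (a_i X_i u + b_i Y_i u)`. -/
lemma VV_hor (u : Hpt n → ℝ) (p R : ℝ) (ξ : Hpt n) :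
    fderiv ℝ u ξ (VV p R ξ) =
      ∑ i, ((AA p R (pt ξ) * ξ.1 i + BB p R (pt ξ) * ξ.2.1 i) * XD u ξ i +
        (AA p R (pt ξ) * ξ.2.1 i - BB p R (pt ξ) * ξ.1 i) * YD u ξ i) := by
  set L := fderiv ℝ u ξ
  have hX : ∀ i, XD u ξ i = L (ex i) + 2 * ξ.2.1 i * L (0, 0, 1) := by
    intro i
    unfold XD
    rw [← smul_eq_mul (2 * ξ.2.1 i), ← map_smul, ← map_add]
    congr 1
    simp [ex]
  have hY : ∀ i, YD u ξ i = L (ey i) - 2 * ξ.1 i * L (0, 0, 1) := by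
    intro i
    unfold YD
    rw [← smul_eq_mul (2 * ξ.1 i), ← map_smul, ← map_sub]
    congr 1
    simp [ey]
  have hC : CC p R (pt ξ) = ∑ i, 2 * BB p R (pt ξ) * (ξ.1 i ^ 2 + ξ.2.1 i ^ 2) := by
    rw [← Finset.mul_sum, ← rr_sq]; simp [CC, pt]; ring
  unfold VV
  rw [clm_decomp, hC, Finset.sum_mul, ← Finset.sum_add_distrib]
  refine Finset.sum_congr rfl fun i _ => ?_
  rw [hX, hY]
  simp
  ring

/-- Cauchy–Schwarz for the pairing with `|∇_H d|^{p-2}∇_H d`. -/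
lemma abs_fderiv_VV_le (u : Hpt n → ℝ) {p R : ℝ} {ξ : Hpt n} (hr : 0 < rr ξ)
    (hs : 0 < SS R (pt ξ)) :
    |fderiv ℝ u ξ (VV p R ξ)| ≤ GG R (pt ξ) ^ (p - 1) * hgradNorm u ξ := by
  have hcs : ∀ (a b c e : Fin n → ℝ), |∑ i, (a i * b i + c i * e i)| ≤
      √(∑ i, (a i ^ 2 + c i ^ 2)) * √(∑ i, (b i ^ 2 + e i ^ 2)) := by
    intro a b c e
    have h := Finset.sum_mul_sq_le_sq_mul_sq (Finset.univ : Finset (Fin n ⊕ Fin n))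
      (Sum.elim a c) (Sum.elim b e)
    simp only [Fintype.sum_sum_type, Sum.elim_inl, Sum.elim_inr, ← Finset.sum_add_distrib] at h
    rw [← Real.sqrt_mul (Finset.sum_nonneg fun i _ => by positivity)]
    exact Real.abs_le_sqrt h
  rw [VV_hor]
  refine (hcs _ _ _ _).trans (le_of_eq ?_)
  rw [sum_rot_sq]
  unfold hgradNorm
  congr 1
  have hW := WW_pos (z := pt ξ) hr hs
  have hK : 0 < KK p R (pt ξ) := by unfold KK; positivity
  rw [← KK_mul_sqrt_WW (z := pt ξ) hr hs, ← Real.sqrt_sq hK.le, ← Real.sqrt_mul (sq_nonneg _)]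
  congr 1
  unfold AA BB WW
  simp only [pt]
  field_simp
  ring

/-- The pairing of `∇_H d` with `|∇_H d|^{p-2}∇_H d`. -/
lemma fderiv_dd_VV {p R ρ : ℝ} {ξ : Hpt n} (hr : 0 < rr ξ) (hs : 0 < SS R (pt ξ)) :
    fderiv ℝ (dd R ρ : Hpt n → ℝ) ξ (VV p R ξ) = GG R (pt ξ) ^ p := by
  have hW := WW_pos (z := pt ξ) hr hs
  have hG := GG_pos (z := pt ξ) hr hs
  have h1 : (√(SS R (pt ξ)))⁻¹ * KK p R (pt ξ) * WW R (pt ξ) = GG R (pt ξ) ^ p := by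
    have e1 : WW R (pt ξ) = √(WW R (pt ξ)) * √(WW R (pt ξ)) := (Real.mul_self_sqrt hW.le).symm
    have e2 : (√(SS R (pt ξ)))⁻¹ * √(WW R (pt ξ)) = GG R (pt ξ) := by
      unfold GG; rw [Real.sqrt_div' _ hs.le]; field_simp
    rw [e1]
    calc _ = (KK p R (pt ξ) * √(WW R (pt ξ))) * ((√(SS R (pt ξ)))⁻¹ * √(WW R (pt ξ))) := by ring
      _ = _ := by
        rw [KK_mul_sqrt_WW (z := pt ξ) hr hs, e2, ← Real.rpow_add_one hG.ne']
        ring_nf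
  rw [← h1, (hasFDerivAt_dd hr hs).fderiv, VV_decomp]
  have hz : rrD ξ (0, 0, 1) = 0 := by rw [rrD_apply]; simp
  simp only [neg_apply, smul_apply, add_apply, rrD_dil hr, rrD_rot, hz, smul_eq_mul, tD_apply]
  unfold AA BB CC WW BB
  simp only [pt]
  field_simp
  ring

end distance

/-! ### Integrability of the densities -/

section hardy
variable {n : ℕ}

/-- The solid torus. -/
def TT (n : ℕ) (R ρ : ℝ) : Set (Hpt n) := {ξ | SS R (pt ξ) < ρ ^ 2}

lemma isOpen_TT (R ρ : ℝ) : IsOpen (TT n R ρ) :=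
  isOpen_lt ((continuous_SS R).comp continuous_pt) continuous_const

/-- The core `{r = R, t = 0}` is Lebesgue null. -/
lemma volume_core (R : ℝ) : volume {ξ : Hpt n | SS R (pt ξ) ≤ 0} = 0 := by
  refine measure_mono_null (t := (LinearMap.ker (tD (n := n)).toLinearMap : Set (Hpt n))) ?_ ?_
  · intro ξ hξ
    have h : (rr ξ - R) ^ 2 + ξ.2.2 ^ 2 ≤ 0 := hξ
    have : ξ.2.2 = 0 := by nlinarith [sq_nonneg (rr ξ - R), sq_nonneg ξ.2.2]
    simpa using this
  · refine Measure.addHaar_submodule _ _ fun h => ?_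
    have : ((0, 0, 1) : Hpt n) ∈ LinearMap.ker (tD (n := n)).toLinearMap := by
      rw [h]; exact Submodule.mem_top
    simp at this

lemma SSet_ae_eq_TT (R ρ : ℝ) : SSet n R ρ =ᵐ[volume] TT n R ρ := by
  have h : ∀ᵐ ξ : Hpt n, ¬ (SS R (pt ξ) ≤ 0) := by
    rw [ae_iff]; simpa using volume_core R
  filter_upwards [h] with ξ hξ
  refine propext ⟨fun h => h.2, fun h => ⟨not_le.1 hξ, h⟩⟩

lemma rr_pos_of_mem {R ρ : ℝ} (hρ : 0 < ρ) (hR : ρ < R) {ξ : Hpt n} (h : ξ ∈ SSet n R ρ) :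
    0 < rr ξ := by
  have := (rr_pos_of_SS hρ h.2).1
  linarith

lemma dd_pos {R ρ : ℝ} (hρ : 0 < ρ) {ξ : Hpt n} (h : ξ ∈ TT n R ρ) : 0 < dd R ρ ξ := by
  have : √(SS R (pt ξ)) < ρ := (Real.sqrt_lt' hρ).2 h
  unfold dd
  linarith

/-- `|∇_H d|` is bounded above and away from zero. -/
lemma GG_bounds {R ρ : ℝ} (hρ : 0 < ρ) (hR : ρ < R) :
    ∃ m M : ℝ, 0 < m ∧ ∀ ξ ∈ SSet n R ρ, m ≤ GG R (pt ξ) ∧ GG R (pt ξ) ≤ M := by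
  have hm : 0 < min 1 (4 * (R - ρ) ^ 2) := by
    have : 0 < R - ρ := by linarith
    apply lt_min one_pos; positivity
  refine ⟨√(min 1 (4 * (R - ρ) ^ 2)), √(max 1 (4 * (R + ρ) ^ 2)), Real.sqrt_pos.2 hm, ?_⟩
  intro ξ hξ
  have hb := rr_pos_of_SS hρ hξ.2
  have hs : 0 < SS R (pt ξ) := hξ.1
  have e : WW R (pt ξ) = (rr ξ - R) ^ 2 + 4 * rr ξ ^ 2 * ξ.2.2 ^ 2 := rfl
  have e' : SS R (pt ξ) = (rr ξ - R) ^ 2 + ξ.2.2 ^ 2 := rfl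
  unfold GG
  constructor
  · apply Real.sqrt_le_sqrt
    rw [le_div_iff₀ hs, e, e', mul_add]
    have h1 := min_le_left 1 (4 * (R - ρ) ^ 2)
    have h2 := min_le_right 1 (4 * (R - ρ) ^ 2)
    have h3 : 4 * (R - ρ) ^ 2 ≤ 4 * rr ξ ^ 2 := by nlinarith
    have := mul_le_mul_of_nonneg_right h1 (sq_nonneg (rr ξ - R))
    have := mul_le_mul_of_nonneg_right (h2.trans h3) (sq_nonneg ξ.2.2)
    linarith
  · apply Real.sqrt_le_sqrt
    rw [div_le_iff₀ hs, e, e', mul_add]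
    have h1 := le_max_left 1 (4 * (R + ρ) ^ 2)
    have h2 := le_max_right 1 (4 * (R + ρ) ^ 2)
    have h3 : 4 * rr ξ ^ 2 ≤ 4 * (R + ρ) ^ 2 := by nlinarith
    have := mul_le_mul_of_nonneg_right h1 (sq_nonneg (rr ξ - R))
    have := mul_le_mul_of_nonneg_right (h3.trans h2) (sq_nonneg ξ.2.2)
    linarith

lemma continuousOn_GG {R ρ : ℝ} : ContinuousOn (fun ξ : Hpt n => GG R (pt ξ)) (SSet n R ρ) := by
  unfold GG
  refine ContinuousOn.sqrt (ContinuousOn.div ?_ ?_ fun ξ hξ => hξ.1.ne')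
  · have h : Continuous (WW R) := by unfold WW; fun_prop
    exact (h.comp continuous_pt).continuousOn
  · exact ((continuous_SS R).comp continuous_pt).continuousOn

lemma continuous_hgradNorm {u : Hpt n → ℝ} (hu : ContDiff ℝ 1 u) : Continuous (hgradNorm u) := by
  unfold hgradNorm
  refine Continuous.sqrt (continuous_finsetSum _ fun i _ => ?_)
  unfold XD YD
  exact ((continuous_fderiv_app hu (by fun_prop)).pow 2).add
    ((continuous_fderiv_app hu (by fun_prop)).pow 2)

lemma hgradNorm_nonneg (u : Hpt n → ℝ) (ξ : Hpt n) : 0 ≤ hgradNorm u ξ := Real.sqrt_nonneg _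

lemma compact_hgradNorm {u : Hpt n → ℝ} (hc : HasCompactSupport u) :
    HasCompactSupport (hgradNorm u) := by
  refine (hc.fderiv (𝕜 := ℝ)).mono ?_
  intro ξ h h0
  apply h
  simp [hgradNorm, XD, YD, h0]

/-- The density `|∇_H u|^p` of the numerator. -/
def NN (p : ℝ) (u : Hpt n → ℝ) (ξ : Hpt n) : ℝ := hgradNorm u ξ ^ p

/-- The density `|∇_H d|^p d^{-p} |u|^p` of the denominator, with `GG` in place of `|∇_H d|`; the
two agree off the core. -/
def DD (p R ρ : ℝ) (u : Hpt n → ℝ) (ξ : Hpt n) : ℝ :=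
  (GG R (pt ξ) ^ p / dd R ρ ξ ^ p) * |u ξ| ^ p

lemma integrable_NN {p : ℝ} (hp : 1 < p) {u : Hpt n → ℝ} (hu : ContDiff ℝ 1 u)
    (hc : HasCompactSupport u) : Integrable (NN p u) := by
  refine integrable_of_C ((continuous_hgradNorm hu).rpow_const fun _ => Or.inr (by linarith)) ?_
  refine (compact_hgradNorm hc).mono ?_
  intro ξ h h0
  apply h
  simp only [NN]
  rw [h0, Real.zero_rpow (by linarith)]

lemma integrable_abs_rpow {p : ℝ} (hp : 1 < p) {u : Hpt n → ℝ} (hu : Continuous u)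
    (hc : HasCompactSupport u) : Integrable (fun ξ => |u ξ| ^ p) := by
  refine integrable_of_C (hu.abs.rpow_const fun _ => Or.inr (by linarith)) (hc.mono ?_)
  intro ξ h h0
  apply h
  simp only
  rw [h0, abs_zero, Real.zero_rpow (by linarith)]

lemma DD_nonneg {p R ρ : ℝ} (hρ : 0 < ρ) (u : Hpt n → ℝ) {ξ : Hpt n} (h : ξ ∈ TT n R ρ) :
    0 ≤ DD p R ρ u ξ := by
  have := dd_pos hρ h
  have : 0 ≤ GG R (pt ξ) := Real.sqrt_nonneg _
  unfold DD
  positivity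

lemma integrableOn_DD {p R ρ : ℝ} (hp : 1 < p) (hρ : 0 < ρ) (hR : ρ < R) {u : Hpt n → ℝ}
    (hu : Continuous u) (hc : HasCompactSupport u) (hsub : tsupport u ⊆ TT n R ρ) :
    IntegrableOn (DD p R ρ u) (SSet n R ρ) := by
  obtain ⟨m, M, hm, hG⟩ := GG_bounds (n := n) hρ hR
  obtain ⟨δ, hδ, hd⟩ : ∃ δ > 0, ∀ ξ ∈ tsupport u, δ ≤ dd R ρ ξ := by
    rcases (tsupport u).eq_empty_or_nonempty with h | h
    · exact ⟨1, one_pos, by simp [h]⟩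
    · obtain ⟨ξ₀, h0, h1⟩ := IsCompact.exists_isMinOn hc h (continuous_dd R ρ).continuousOn
      exact ⟨_, dd_pos hρ (hsub h0), h1⟩
  have hS := (isOpen_SSet (n := n) R ρ).measurableSet
  refine Integrable.mono' (g := fun ξ => (M ^ p / δ ^ p) * |u ξ| ^ p)
    ((integrable_abs_rpow hp hu hc).const_mul _).integrableOn ?_ ?_
  · refine ContinuousOn.aestronglyMeasurable ?_ hS
    refine ContinuousOn.mul (ContinuousOn.div ?_ ?_ ?_) ?_
    · exact continuousOn_GG.rpow_const fun _ _ => Or.inr (by linarith)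
    · exact (continuous_dd R ρ).continuousOn.rpow_const fun _ _ => Or.inr (by linarith)
    · exact fun ξ hξ => (Real.rpow_pos_of_pos (dd_pos hρ hξ.2) _).ne'
    · exact (hu.abs.rpow_const fun _ => Or.inr (by linarith)).continuousOn
  · refine (ae_restrict_iff' hS).2 (Eventually.of_forall fun ξ hξ => ?_)
    rw [Real.norm_of_nonneg (DD_nonneg hρ u hξ.2)]
    unfold DD
    by_cases hx : ξ ∈ tsupport u
    · have h1 := hG ξ hξ
      have h2 := hd ξ hx
      have h3 : 0 ≤ GG R (pt ξ) := Real.sqrt_nonneg _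
      have h4 : 0 ≤ M := h3.trans h1.2
      have h5 := h1.2
      gcongr
    · rw [image_eq_zero_of_notMem_tsupport hx, abs_zero, Real.zero_rpow (by linarith)]
      simp

lemma setIntegral_DD_pos {p R ρ : ℝ} (hp : 1 < p) (hρ : 0 < ρ) (hR : ρ < R) {u : Hpt n → ℝ}
    (hu : Continuous u) (hc : HasCompactSupport u) (hsub : tsupport u ⊆ TT n R ρ) (h0 : u ≠ 0) :
    0 < ∫ ξ in SSet n R ρ, DD p R ρ u ξ := by
  have hS := (isOpen_SSet (n := n) R ρ).measurableSet
  rw [setIntegral_pos_iff_support_of_nonneg_ae ((ae_restrict_iff' hS).2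
    (Eventually.of_forall fun ξ hξ => DD_nonneg hρ u hξ.2)) (integrableOn_DD hp hρ hR hu hc hsub)]
  have ho : IsOpen (Function.support u) := hu.isOpen_support
  have hne : (Function.support u).Nonempty := Function.support_nonempty_iff.2 h0
  refine (ho.measure_pos volume hne).trans_le ?_
  have hle : Function.support u ⊆ (Function.support (DD p R ρ u) ∩ SSet n R ρ) ∪
      {ξ : Hpt n | SS R (pt ξ) ≤ 0} := by
    intro ξ hξ
    have hT := hsub (subset_tsupport u hξ)
    by_cases hs : SS R (pt ξ) ≤ 0
    · exact Or.inr hs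
    · have hmem : ξ ∈ SSet n R ρ := ⟨not_le.1 hs, hT⟩
      refine Or.inl ⟨?_, hmem⟩
      have h1 := dd_pos hρ hT
      have h2 := GG_pos (z := pt ξ) (rr_pos_of_mem hρ hR hmem) hmem.1
      have h3 : 0 < |u ξ| := abs_pos.2 hξ
      have : 0 < DD p R ρ u ξ := by unfold DD; positivity
      exact this.ne'
  refine (measure_mono hle).trans ((measure_union_le _ _).trans ?_)
  rw [volume_core, add_zero]

/-- Young's inequality with exponents `p` and `p/(p-1)`, cleared of denominators. -/
lemma young' {p a b : ℝ} (hp : 1 < p) (ha : 0 ≤ a) (hb : 0 ≤ b) :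
    p * (b ^ (p - 1) * a) ≤ a ^ p + (p - 1) * b ^ p := by
  have hp1 : p - 1 ≠ 0 := by linarith
  have h := Real.young_inequality_of_nonneg ha (Real.rpow_nonneg hb (p - 1))
    (Real.HolderConjugate.conjExponent hp)
  rw [← Real.rpow_mul hb] at h
  unfold Real.conjExponent at h
  rw [show (p - 1) * (p / (p - 1)) = p by field_simp] at h
  have h' := mul_le_mul_of_nonneg_left h (by linarith : (0 : ℝ) ≤ p)
  calc p * (b ^ (p - 1) * a) = p * (a * b ^ (p - 1)) := by ring
    _ ≤ _ := h'
    _ = _ := by field_simp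

end hardy

/-! ### Hardy's inequality on the torus -/

section hardyineq
variable {n : ℕ}

/-- A cutoff as a function of `τ = d`: it vanishes for `ρ - τ ≤ ε`, near the core, and equals `1` for
`ρ - τ ≥ 2ε`. -/
def cut (ρ ε τ : ℝ) : ℝ := Real.smoothTransition ((ρ - τ) / ε - 1)

lemma contDiff_cut (ρ ε : ℝ) : ContDiff ℝ 1 (cut ρ ε) :=
  (Real.smoothTransition.contDiff (n := 1)).comp (by fun_prop)

lemma deriv_cut_nonpos {ρ ε : ℝ} (hε : 0 < ε) (τ : ℝ) : deriv (cut ρ ε) τ ≤ 0 := by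
  have h : Monotone (fun τ => -cut ρ ε τ) := by
    intro a b hab
    refine neg_le_neg (Real.smoothTransition.monotone ?_)
    have := div_le_div_of_nonneg_right (sub_le_sub_left hab ρ) hε.le
    linarith
  have := h.deriv_nonneg (x := τ)
  rw [deriv.fun_neg] at this
  linarith

lemma cut_ne_zero {ρ ε τ : ℝ} (hε : 0 < ε) (h : cut ρ ε τ ≠ 0) : ε ≤ ρ - τ := by
  by_contra hc
  apply h
  apply Real.smoothTransition.zero_of_nonpos
  have : (ρ - τ) / ε < 1 := by rw [div_lt_one hε]; linarith
  linarith

/-- Hardy's test function `χ(d)|u|^p d^{1-p}`, cut off near the core. -/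
def hw (p R ρ ε : ℝ) (u : Hpt n → ℝ) (ξ : Hpt n) : ℝ :=
  |u ξ| ^ p * (cut ρ ε (dd R ρ ξ) * dd R ρ ξ ^ (1 - p))

lemma tsupport_hw {p R ρ ε : ℝ} (hp : 1 < p) (hε : 0 < ε) {u : Hpt n → ℝ}
    (hsub : tsupport u ⊆ TT n R ρ) :
    tsupport (hw p R ρ ε u) ⊆ tsupport u ∩ SSet n R ρ := by
  have h1 : tsupport (hw p R ρ ε u) ⊆ tsupport u ∩ {ξ | ε ≤ ρ - dd R ρ ξ} := by
    refine closure_minimal ?_ ((isClosed_tsupport u).inter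
      (isClosed_le continuous_const (continuous_const.sub (continuous_dd R ρ))))
    intro ξ hξ
    have h : |u ξ| ^ p * (cut ρ ε (dd R ρ ξ) * dd R ρ ξ ^ (1 - p)) ≠ 0 := hξ
    refine ⟨subset_tsupport u fun h0 => h ?_, cut_ne_zero hε fun h0 => h ?_⟩
    · rw [h0, abs_zero, Real.zero_rpow (by linarith), zero_mul]
    · rw [h0, zero_mul, mul_zero]
  intro ξ hξ
  obtain ⟨h2, h3⟩ := h1 hξ
  refine ⟨h2, ?_, hsub h2⟩
  have h4 : ε ≤ ρ - (ρ - √(SS R (pt ξ))) := h3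
  exact Real.sqrt_pos.1 (by linarith)

lemma contDiffAt_dd {m : WithTop ℕ∞} {R ρ : ℝ} {ξ : Hpt n} (hr : 0 < rr ξ)
    (hs : 0 < SS R (pt ξ)) : ContDiffAt ℝ m (dd R ρ : Hpt n → ℝ) ξ := by
  have h : ContDiff ℝ m (SS R) := by unfold SS; fun_prop
  exact contDiffAt_const.sub ((h.contDiffAt.comp ξ (contDiffAt_pt hr)).sqrt hs.ne')

lemma contDiff_hw {p R ρ ε : ℝ} (hp : 1 < p) (hρ : 0 < ρ) (hR : ρ < R) (hε : 0 < ε)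
    {u : Hpt n → ℝ} (hu : ContDiff ℝ 1 u) (hsub : tsupport u ⊆ TT n R ρ) :
    ContDiff ℝ 1 (hw p R ρ ε u) := by
  refine contDiff_of_tsupport fun ξ hξ => ?_
  have hS := (tsupport_hw hp hε hsub hξ).2
  have hd := contDiffAt_dd (m := 1) (ρ := ρ) (rr_pos_of_mem hρ hR hS) hS.1
  refine ContDiffAt.mul ?_ (ContDiffAt.mul ?_ ?_)
  · exact (((contDiff_norm_rpow (E := ℝ) hp).comp hu).contDiffAt)
  · exact (contDiff_cut ρ ε).contDiffAt.comp ξ hd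
  · exact hd.rpow_const_of_ne (ne_of_gt (dd_pos hρ hS.2))

/-- Pointwise comparison behind Hardy's inequality. The derivative of `χ(d)|u|^p d^{1-p}` along
`|∇_H d|^{p-2}∇_H d` is estimated by Cauchy–Schwarz and Young; the term with `χ'` has a favourable
sign because `χ` is nonincreasing in `d`. -/
lemma hardy_pointwise {p R ρ ε : ℝ} (hp : 1 < p) (hρ : 0 < ρ) (hR : ρ < R) (hε : 0 < ε)
    {u : Hpt n → ℝ} (hu : ContDiff ℝ 1 u) {ξ : Hpt n} (hξ : ξ ∈ SSet n R ρ) :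
    ((p - 1) / p) ^ (p - 1) * fderiv ℝ (hw p R ρ ε u) ξ (VV p R ξ) ≤
      cut ρ ε (dd R ρ ξ) * (NN p u ξ - ((p - 1) / p) ^ p * DD p R ρ u ξ) := by
  have hr := rr_pos_of_mem hρ hR hξ
  have hd := dd_pos hρ hξ.2
  have hG := GG_pos (z := pt ξ) hr hξ.1
  have hdf := (contDiffAt_dd (m := 1) (ρ := ρ) hr hξ.1).differentiableAt one_ne_zero |>.hasFDerivAt
  have h1 : HasFDerivAt (fun η => |u η| ^ p) ((p * |u ξ| ^ (p - 2) * u ξ) • fderiv ℝ u ξ) ξ :=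
    (hasDerivAt_abs_rpow (u ξ) hp).comp_hasFDerivAt ξ
      (hu.differentiable one_ne_zero ξ).hasFDerivAt
  have h2 : HasFDerivAt (fun η => cut ρ ε (dd R ρ η))
      (deriv (cut ρ ε) (dd R ρ ξ) • fderiv ℝ (dd R ρ) ξ) ξ :=
    ((contDiff_cut ρ ε).differentiable one_ne_zero _).hasDerivAt.comp_hasFDerivAt ξ hdf
  have h3 : HasFDerivAt (fun η => dd R ρ η ^ (1 - p))
      (((1 - p) * dd R ρ ξ ^ (1 - p - 1)) • fderiv ℝ (dd R ρ) ξ) ξ :=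
    (Real.hasDerivAt_rpow_const (Or.inl hd.ne')).comp_hasFDerivAt ξ hdf
  have h4 : HasFDerivAt (hw p R ρ ε u) _ ξ := h1.mul (h2.mul h3)
  rw [h4.fderiv]
  simp only [add_apply, smul_apply, smul_eq_mul, fderiv_dd_VV hr hξ.1]
  have hcs := abs_fderiv_VV_le u (p := p) hr hξ.1
  set L := fderiv ℝ u ξ (VV p R ξ)
  set N := hgradNorm u ξ with hN
  set G := GG R (pt ξ)
  set δ := dd R ρ ξ
  set c := cut ρ ε δ
  have hc : 0 ≤ c := Real.smoothTransition.nonneg _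
  have hc' := deriv_cut_nonpos (ρ := ρ) hε δ
  set c' := deriv (cut ρ ε) δ
  set q := (p - 1) / p with hq
  have hq0 : 0 < q := div_pos (by linarith) (by linarith)
  have hN0 : 0 ≤ N := hgradNorm_nonneg u ξ
  -- Cauchy–Schwarz for the term that differentiates `u`
  have habs : |u ξ| ^ (p - 2) * u ξ * L ≤ |u ξ| ^ (p - 1) * (G ^ (p - 1) * N) := by
    refine (le_abs_self _).trans ?_
    rw [abs_mul]
    refine mul_le_mul ?_ hcs (abs_nonneg _) (by positivity)
    by_cases h0 : u ξ = 0
    · simp [h0]; positivity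
    · have : 0 < |u ξ| := abs_pos.2 h0
      rw [abs_mul, abs_of_nonneg (by positivity : 0 ≤ |u ξ| ^ (p - 2)),
        ← Real.rpow_add_one this.ne']
      apply le_of_eq; ring_nf
  have hY := young' hp hN0 (b := q * (|u ξ| * G / δ)) (by positivity)
  have ev : ∀ s : ℝ, (q * (|u ξ| * G / δ)) ^ s = q ^ s * (|u ξ| ^ s * G ^ s * δ ^ (-s)) := by
    intro s
    rw [Real.mul_rpow hq0.le (by positivity), Real.div_rpow (by positivity) hd.le,
      Real.mul_rpow (by positivity) hG.le, Real.rpow_neg hd.le]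
    rfl
  rw [ev, ev] at hY
  have eD : DD p R ρ u ξ = |u ξ| ^ p * G ^ p * δ ^ (-p) := by
    change G ^ p / δ ^ p * |u ξ| ^ p = _
    rw [Real.rpow_neg hd.le]
    ring
  have eq1 : q ^ p * p = q ^ (p - 1) * (p - 1) := by
    have : q ^ p = q ^ (p - 1) * q := by
      rw [← Real.rpow_add_one hq0.ne']; ring_nf
    rw [this, hq]; field_simp
  have hneg : |u ξ| ^ p * (δ ^ (1 - p) * (c' * G ^ p)) ≤ 0 := by
    have : 0 ≤ |u ξ| ^ p * δ ^ (1 - p) * G ^ p := by positivity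
    nlinarith
  rw [show (1 - p - 1 : ℝ) = -p by ring]
  rw [show -(p - 1) = 1 - p by ring] at hY
  have hNN : NN p u ξ = N ^ p := rfl
  rw [hNN, eD]
  have hqq : 0 ≤ q ^ (p - 1) := by positivity
  set D := |u ξ| ^ p * G ^ p * δ ^ (-p) with hD
  have step : q ^ (p - 1) * (p * δ ^ (1 - p) * (|u ξ| ^ (p - 2) * u ξ * L) - (p - 1) * D)
      ≤ N ^ p - q ^ p * D := by
    have a1 : q ^ (p - 1) * (p * δ ^ (1 - p) * (|u ξ| ^ (p - 2) * u ξ * L)) ≤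
        p * (q ^ (p - 1) * (|u ξ| ^ (p - 1) * G ^ (p - 1) * δ ^ (1 - p)) * N) := by
      have : 0 ≤ q ^ (p - 1) * (p * δ ^ (1 - p)) := by positivity
      have := mul_le_mul_of_nonneg_left habs this
      calc _ = q ^ (p - 1) * (p * δ ^ (1 - p)) * (|u ξ| ^ (p - 2) * u ξ * L) := by ring
        _ ≤ _ := this
        _ = _ := by ring
    have a2 : q ^ (p - 1) * (p - 1) * D = q ^ p * p * D := by rw [eq1]
    linarith
  have step2 := mul_le_mul_of_nonneg_left step hc
  have step3 := mul_le_mul_of_nonneg_left hneg hqq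
  refine le_trans (le_of_eq ?_) (le_trans (add_le_add step2 step3) (by simp))
  rw [hD]
  ring

/-- Hardy's inequality on the torus, stated on the torus minus its null core. -/
lemma hardy {p R ρ : ℝ} (hp : 1 < p) (hρ : 0 < ρ) (hR : ρ < R)
    (h1 : (2 * (n : ℝ) - 1) * ρ ≤ 4 * (R - ρ) ^ 3) (h2 : (2 * (n : ℝ) + p - 2) * ρ ≤ R) (hn : 1 ≤ n)
    {u : Hpt n → ℝ} (hu : ContDiff ℝ 1 u) (hc : HasCompactSupport u)
    (hsub : tsupport u ⊆ TT n R ρ) :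
    ((p - 1) / p) ^ p * ∫ ξ in SSet n R ρ, DD p R ρ u ξ ≤ ∫ ξ in SSet n R ρ, NN p u ξ := by
  have hS := (isOpen_SSet (n := n) R ρ).measurableSet
  have iN : IntegrableOn (NN p u) (SSet n R ρ) := (integrable_NN hp hu hc).integrableOn
  have iD := integrableOn_DD hp hρ hR hu.continuous hc hsub
  have iF : IntegrableOn (fun ξ => NN p u ξ - ((p - 1) / p) ^ p * DD p R ρ u ξ) (SSet n R ρ) :=
    iN.sub (iD.const_mul _)
  have cutm : ∀ ε, AEStronglyMeasurable
      (fun ξ => cut ρ ε (dd R ρ ξ) * (NN p u ξ - ((p - 1) / p) ^ p * DD p R ρ u ξ))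
      (volume.restrict (SSet n R ρ)) := fun ε =>
    (((contDiff_cut ρ ε).continuous.comp (continuous_dd R ρ)).aestronglyMeasurable).mul
      iF.aestronglyMeasurable
  have cutb : ∀ ε, ∀ ξ : Hpt n,
      ‖cut ρ ε (dd R ρ ξ) * (NN p u ξ - ((p - 1) / p) ^ p * DD p R ρ u ξ)‖ ≤
        ‖NN p u ξ - ((p - 1) / p) ^ p * DD p R ρ u ξ‖ := by
    intro ε ξ
    rw [norm_mul]
    refine mul_le_of_le_one_left (norm_nonneg _) ?_
    rw [Real.norm_of_nonneg (show 0 ≤ cut ρ ε (dd R ρ ξ) from Real.smoothTransition.nonneg _)]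
    exact Real.smoothTransition.le_one _
  -- superharmonicity tested with the truncated function, for each width `ε` of the cutoff
  have key : ∀ ε > 0, 0 ≤ ∫ ξ in SSet n R ρ,
      cut ρ ε (dd R ρ ξ) * (NN p u ξ - ((p - 1) / p) ^ p * DD p R ρ u ξ) := by
    intro ε hε
    have hts := tsupport_hw (ρ := ρ) hp hε hsub
    obtain ⟨g, ig, g0, gle, goff⟩ := weak_super hp hρ hR h1 h2 hn
      (contDiff_hw hp hρ hR hε hu hsub)
      (hc.mono' ((subset_tsupport _).trans (hts.trans inter_subset_left)))
      (hts.trans inter_subset_right) (by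
        intro ξ
        by_cases hξ : ξ ∈ tsupport (hw p R ρ ε u)
        · have hd := dd_pos hρ (hts hξ).2.2
          have : 0 ≤ cut ρ ε (dd R ρ ξ) := Real.smoothTransition.nonneg _
          unfold hw; positivity
        · rw [image_eq_zero_of_notMem_tsupport hξ])
    have hq0 : 0 < ((p - 1) / p) ^ (p - 1) :=
      Real.rpow_pos_of_pos (div_pos (by linarith) (by linarith)) _
    have e0 : ∫ ξ in SSet n R ρ, ((p - 1) / p) ^ (p - 1) * g ξ = 0 := by
      rw [integral_const_mul, setIntegral_eq_integral_of_forall_compl_eq_zero goff, g0, mul_zero]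
    rw [← e0]
    refine setIntegral_mono_on (ig.const_mul _).integrableOn (Integrable.mono iF (cutm ε)
      (Eventually.of_forall (cutb ε))) hS fun ξ hξ => ?_
    exact (mul_le_mul_of_nonneg_left (gle ξ) hq0.le).trans (hardy_pointwise hp hρ hR hε hu hξ)
  have lim : Tendsto (fun k : ℕ => ∫ ξ in SSet n R ρ, cut ρ (1 / ((k : ℝ) + 1)) (dd R ρ ξ) *
      (NN p u ξ - ((p - 1) / p) ^ p * DD p R ρ u ξ)) atTop
      (𝓝 (∫ ξ in SSet n R ρ, (NN p u ξ - ((p - 1) / p) ^ p * DD p R ρ u ξ))) := by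
    refine tendsto_integral_of_dominated_convergence _ (fun k => cutm _) iF.norm
      (fun k => Eventually.of_forall (cutb _)) ?_
    refine (ae_restrict_iff' hS).2 (Eventually.of_forall fun ξ hξ => ?_)
    have hs : 0 < ρ - dd R ρ ξ := by
      have := Real.sqrt_pos.2 hξ.1
      unfold dd; linarith
    refine tendsto_const_nhds.congr' ?_
    obtain ⟨k0, hk0⟩ := exists_nat_gt (2 / (ρ - dd R ρ ξ))
    filter_upwards [eventually_ge_atTop k0] with k hk
    have hk' : (k0 : ℝ) ≤ k := by exact_mod_cast hk
    have : cut ρ (1 / ((k : ℝ) + 1)) (dd R ρ ξ) = 1 := by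
      apply Real.smoothTransition.one_of_one_le
      rw [div_lt_iff₀ hs] at hk0
      rw [div_div_eq_mul_div, div_one]
      nlinarith
    rw [this, one_mul]
  have h0 := ge_of_tendsto' lim fun k => key _ (by positivity)
  rw [integral_sub iN (iD.const_mul _), integral_const_mul] at h0
  linarith

end hardyineq

/-! ### Functions of `d` and the flux through its level sets -/

section coarea
variable {n : ℕ}

lemma norm_le_of_mem_TT {R ρ : ℝ} (hρ : 0 < ρ) (hR : ρ < R) {ξ : Hpt n} (h : ξ ∈ TT n R ρ) :
    ‖ξ‖ ≤ R + ρ := by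
  have hb := (rr_pos_of_SS hρ h).2
  have hle : ∀ i, ξ.1 i ^ 2 + ξ.2.1 i ^ 2 ≤ rr ξ ^ 2 := by
    intro i
    rw [rr_sq]
    exact Finset.single_le_sum (f := fun i => ξ.1 i ^ 2 + ξ.2.1 i ^ 2)
      (fun i _ => by positivity) (Finset.mem_univ i)
  have hr := rr_nonneg ξ
  have ht : ξ.2.2 ^ 2 ≤ ρ ^ 2 := by
    have h' : (rr ξ - R) ^ 2 + ξ.2.2 ^ 2 < ρ ^ 2 := h
    nlinarith [sq_nonneg (rr ξ - R)]
  rw [Prod.norm_def, Prod.norm_def]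
  refine max_le ?_ (max_le ?_ ?_)
  · refine (pi_norm_le_iff_of_nonneg (by linarith)).2 fun i => ?_
    refine le_trans ?_ hb.le
    exact abs_le_of_sq_le_sq (by nlinarith [hle i, sq_nonneg (ξ.2.1 i)]) hr
  · refine (pi_norm_le_iff_of_nonneg (by linarith)).2 fun i => ?_
    refine le_trans ?_ hb.le
    exact abs_le_of_sq_le_sq (by nlinarith [hle i, sq_nonneg (ξ.1 i)]) hr
  · have := abs_le_of_sq_le_sq ht hρ.le
    rw [Real.norm_eq_abs]
    linarith

lemma volume_TT_lt_top {R ρ : ℝ} (hρ : 0 < ρ) (hR : ρ < R) : volume (TT n R ρ) < ⊤ := by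
  refine (Metric.isBounded_iff_subset_closedBall 0).2 ⟨R + ρ, fun ξ h => ?_⟩ |>.measure_lt_top
  simpa using norm_le_of_mem_TT hρ hR h

lemma volume_TT_pos {R ρ : ℝ} (hρ : 0 < ρ) (hR : ρ < R) (hn : 1 ≤ n) : 0 < volume (TT n R ρ) := by
  refine (isOpen_TT R ρ).measure_pos _ ⟨(Pi.single ⟨0, hn⟩ R, 0, 0), ?_⟩
  have : rr ((Pi.single ⟨0, hn⟩ R, 0, 0) : Hpt n) = R := by
    rw [← Real.sqrt_sq (rr_nonneg _), rr_sq]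
    have : ∑ i, ((Pi.single (⟨0, hn⟩ : Fin n) R : Fin n → ℝ) i ^ 2 + (0 : Fin n → ℝ) i ^ 2) = R ^ 2 := by
      rw [Finset.sum_eq_single ⟨0, hn⟩]
      · simp
      · intro b _ hb; simp [hb]
      · simp
    simp only at this ⊢
    rw [this, Real.sqrt_sq (by linarith)]
  change (rr ((Pi.single ⟨0, hn⟩ R, 0, 0) : Hpt n) - R) ^ 2 + (0 : ℝ) ^ 2 < ρ ^ 2
  rw [this]
  have : 0 < ρ ^ 2 := by positivity
  simpa using this

/-- A function of `d` that vanishes near the boundary and is constant near the core is as smooth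
as its profile and has compact support in the torus. -/
lemma comp_dd_smooth {m : WithTop ℕ∞} {R ρ α b c : ℝ} (hρ : 0 < ρ) (hR : ρ < R) (hα : 0 < α)
    (hb : b < ρ) {φ : ℝ → ℝ} (hφ : ∀ τ, 0 < τ → ContDiffAt ℝ m φ τ) (h0 : ∀ τ, τ < α → φ τ = 0)
    (h1 : ∀ τ, b ≤ τ → φ τ = c) :
    ContDiff ℝ m (fun ξ : Hpt n => φ (dd R ρ ξ)) ∧
      HasCompactSupport (fun ξ : Hpt n => φ (dd R ρ ξ)) ∧
      tsupport (fun ξ : Hpt n => φ (dd R ρ ξ)) ⊆ TT n R ρ := by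
  have hts : tsupport (fun ξ : Hpt n => φ (dd R ρ ξ)) ⊆ {ξ | α ≤ dd R ρ ξ} := by
    refine closure_minimal ?_ (isClosed_le continuous_const (continuous_dd R ρ))
    intro ξ hξ
    by_contra h
    exact hξ (h0 _ (not_le.1 h))
  have hT : ∀ ξ : Hpt n, α ≤ dd R ρ ξ → ξ ∈ TT n R ρ := by
    intro ξ hξ
    have : √(SS R (pt ξ)) < ρ := by unfold dd at hξ; linarith
    exact (Real.sqrt_lt' hρ).1 this
  refine ⟨contDiff_of_tsupport fun ξ hξ => ?_, ?_, fun ξ hξ => hT ξ (hts hξ)⟩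
  · have hd := hts hξ
    have hTξ := hT ξ hd
    rcases lt_or_ge b (dd R ρ ξ) with h | h
    · refine (contDiffAt_const (c := c)).congr_of_eventuallyEq ?_
      filter_upwards [(continuous_dd R ρ).continuousAt.eventually (lt_mem_nhds h)] with η hη
      exact h1 _ (le_of_lt hη)
    · have hs : 0 < SS R (pt ξ) := by
        refine Real.sqrt_pos.1 ?_
        unfold dd at h
        linarith
      have hr := rr_pos_of_mem hρ hR (ξ := ξ) ⟨hs, hTξ⟩
      exact (hφ _ (dd_pos hρ hTξ)).comp ξ (contDiffAt_dd hr hs)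
  · refine HasCompactSupport.of_support_subset_isCompact
      (isCompact_closedBall (0 : Hpt n) (R + ρ)) ?_
    intro ξ hξ
    simpa using norm_le_of_mem_TT hρ hR (hT ξ (hts (subset_tsupport _ hξ)))

/-- Divergence theorem for `φ(d)` times the field `r^{1-2n}((r-R)∂_r + t∂_t)`, which is normal to the
level sets of `d` and has divergence `2r^{1-2n}`. -/
lemma flux {R ρ α b c : ℝ} (hn : 1 ≤ n) (hρ : 0 < ρ) (hR : ρ < R) (hα : 0 < α) (hb : b < ρ)
    {φ κ : ℝ → ℝ} (hφ : ContDiff ℝ 1 φ) (hφκ : ∀ τ, HasDerivAt φ (κ τ) τ)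
    (h0 : ∀ τ, τ < α → φ τ = 0) (h1 : ∀ τ, b ≤ τ → φ τ = c) :
    IntegrableOn (fun ξ => φ (dd R ρ ξ) * (rr ξ ^ (2 * n - 1))⁻¹) (SSet n R ρ) ∧
    IntegrableOn (fun ξ => κ (dd R ρ ξ) * (√(SS R (pt ξ)) * (rr ξ ^ (2 * n - 1))⁻¹)) (SSet n R ρ) ∧
    ∫ ξ in SSet n R ρ, κ (dd R ρ ξ) * (√(SS R (pt ξ)) * (rr ξ ^ (2 * n - 1))⁻¹) =
      2 * ∫ ξ in SSet n R ρ, φ (dd R ρ ξ) * (rr ξ ^ (2 * n - 1))⁻¹ := by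
  have hS := (isOpen_SSet (n := n) R ρ).measurableSet
  obtain ⟨k, rfl⟩ : ∃ k, n = k + 1 := ⟨n - 1, by omega⟩
  rw [show 2 * (k + 1) - 1 = 2 * k + 1 by omega]
  obtain ⟨hw, hc, hsub⟩ := comp_dd_smooth (n := k + 1) (m := 1) hρ hR hα hb
    (fun τ _ => hφ.contDiffAt) h0 h1
  set w : Hpt (k + 1) → ℝ := fun ξ => φ (dd R ρ ξ) with hwdef
  have hrT : ∀ ξ ∈ TT (k + 1) R ρ, 0 < rr ξ := fun ξ h => by
    have := (rr_pos_of_SS hρ h).1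
    linarith
  set F0 : ℝ × ℝ → ℝ := fun z => (z.1 ^ (2 * k + 1))⁻¹ with hF0
  set F1 : ℝ × ℝ → ℝ := fun z => (z.1 - R) * (z.1 ^ (2 * k + 2))⁻¹ with hF1
  set F2 : ℝ × ℝ → ℝ := fun z => z.2 * (z.1 ^ (2 * k + 1))⁻¹ with hF2
  have c0 : ∀ ξ : Hpt (k + 1), 0 < rr ξ → ContDiffAt ℝ 1 F0 (pt ξ) := fun ξ h =>
    (contDiffAt_fst.pow _).inv (pow_pos h _).ne'
  have c1 : ∀ ξ : Hpt (k + 1), 0 < rr ξ → ContDiffAt ℝ 1 F1 (pt ξ) := fun ξ h =>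
    ContDiffAt.mul (by fun_prop) ((contDiffAt_fst.pow _).inv (pow_pos h _).ne')
  have c2 : ∀ ξ : Hpt (k + 1), 0 < rr ξ → ContDiffAt ℝ 1 F2 (pt ξ) := fun ξ h =>
    contDiffAt_snd.mul ((contDiffAt_fst.pow _).inv (pow_pos h _).ne')
  obtain ⟨a0, b0⟩ := mul_pt hw hc (F := F0) fun ξ hξ => ⟨hrT ξ (hsub hξ), c0 ξ (hrT ξ (hsub hξ))⟩
  obtain ⟨a1, b1⟩ := mul_pt hw hc (F := F1) fun ξ hξ => ⟨hrT ξ (hsub hξ), c1 ξ (hrT ξ (hsub hξ))⟩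
  obtain ⟨a2, b2⟩ := mul_pt hw hc (F := F2) fun ξ hξ => ⟨hrT ξ (hsub hξ), c2 ξ (hrT ξ (hsub hξ))⟩
  set H1 : Hpt (k + 1) → ℝ := fun ξ => w ξ * F1 (pt ξ) with hH1
  set H2 : Hpt (k + 1) → ℝ := fun ξ => w ξ * F2 (pt ξ) with hH2
  have i0 := integrable_of_C a0.continuous b0
  have i1 := integrable_of_C a1.continuous b1
  have i2 : Integrable (fun ξ => fderiv ℝ H1 ξ (ξ.1, ξ.2.1, 0)) :=
    integrable_fderiv_app a1 b1 (by fun_prop)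
  have i3 : Integrable (fun ξ => fderiv ℝ H2 ξ (0, 0, 1)) :=
    integrable_fderiv_app a2 b2 (by fun_prop)
  set P : Hpt (k + 1) → ℝ := fun ξ => 2 * (k + 1 : ℕ) * H1 ξ + fderiv ℝ H1 ξ (ξ.1, ξ.2.1, 0) +
    fderiv ℝ H2 ξ (0, 0, 1) with hP
  have iP : Integrable P := ((i1.const_mul _).add i2).add i3
  have eP : ∫ ξ, P ξ = 0 := by
    have j1 := integral_add ((i1.const_mul (2 * ((k + 1 : ℕ) : ℝ))).add i2) i3
    have j2 := integral_add (i1.const_mul (2 * ((k + 1 : ℕ) : ℝ))) i2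
    simp only [Pi.add_apply] at j1
    rw [hP, j1, j2, integral_const_mul, integral_fderiv_dil a1 b1, integral_fderiv_t a2 b2]
    ring
  have ePS : ∫ ξ in SSet (k + 1) R ρ, P ξ = 0 := by
    rw [setIntegral_congr_set (SSet_ae_eq_TT R ρ), setIntegral_eq_integral_of_forall_compl_eq_zero, eP]
    intro ξ hξ
    have hξ' : ξ ∉ tsupport w := fun h => hξ (hsub h)
    have o1 : fderiv ℝ H1 ξ = 0 :=
      fderiv_of_notMem_tsupport ℝ fun h => hξ' (tsupport_mul_subset_left h)
    have o2 : fderiv ℝ H2 ξ = 0 :=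
      fderiv_of_notMem_tsupport ℝ fun h => hξ' (tsupport_mul_subset_left h)
    change 2 * ((k + 1 : ℕ) : ℝ) * (w ξ * F1 (pt ξ)) + fderiv ℝ H1 ξ (ξ.1, ξ.2.1, 0) +
      fderiv ℝ H2 ξ (0, 0, 1) = 0
    rw [o1, o2, image_eq_zero_of_notMem_tsupport hξ']
    simp
  have hPeq : ∀ ξ ∈ SSet (k + 1) R ρ, κ (dd R ρ ξ) * (√(SS R (pt ξ)) * (rr ξ ^ (2 * k + 1))⁻¹)
      = 2 * (w ξ * F0 (pt ξ)) - P ξ := by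
    intro ξ hξ
    have hr := rr_pos_of_mem hρ hR hξ
    have hs := Real.sqrt_pos.2 hξ.1
    have hdw : fderiv ℝ w ξ = κ (dd R ρ ξ) • fderiv ℝ (dd R ρ) ξ :=
      ((hφκ _).comp_hasFDerivAt ξ (hasFDerivAt_dd hr hξ.1).differentiableAt.hasFDerivAt).fderiv
    have g1 : fderiv ℝ F1 (pt ξ) (1, 0) =
        (rr ξ ^ (2 * k + 2))⁻¹ - (rr ξ - R) * ((2 * k + 2) * (rr ξ ^ (2 * k + 3))⁻¹) := by
      have h : HasFDerivAt F1 (fderiv ℝ F1 (pt ξ)) (rr ξ, ξ.2.2) :=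
        ((c1 ξ hr).differentiableAt one_ne_zero).hasFDerivAt
      have hp1 : HasDerivAt (fun x : ℝ => (x, ξ.2.2)) (1, 0) (rr ξ) :=
        (hasDerivAt_id (rr ξ)).prodMk (hasDerivAt_const (rr ξ) ξ.2.2)
      have hA : HasDerivAt (F1 ∘ fun x => (x, ξ.2.2)) (fderiv ℝ F1 (pt ξ) (1, 0)) (rr ξ) :=
        h.comp_hasDerivAt (rr ξ) hp1
      have hB := ((hasDerivAt_id (rr ξ)).sub_const R).mul
        (((hasDerivAt_id (rr ξ)).pow (2 * k + 2)).inv (pow_pos hr _).ne')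
      rw [hA.unique hB]
      simp only [id, Pi.pow_apply, Pi.inv_apply, show 2 * k + 2 - 1 = 2 * k + 1 by omega]
      push_cast
      field_simp
      ring
    have g2 : fderiv ℝ F2 (pt ξ) (0, 1) = (rr ξ ^ (2 * k + 1))⁻¹ := by
      have h : HasFDerivAt F2 (fderiv ℝ F2 (pt ξ)) (rr ξ, ξ.2.2) :=
        ((c2 ξ hr).differentiableAt one_ne_zero).hasFDerivAt
      have hA : HasDerivAt (fun x => F2 (rr ξ, x)) (fderiv ℝ F2 (pt ξ) (0, 1)) ξ.2.2 :=
        h.comp_hasDerivAt ξ.2.2 ((hasDerivAt_const ξ.2.2 (rr ξ)).prodMk (hasDerivAt_id ξ.2.2))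
      have hB := (hasDerivAt_id ξ.2.2).mul_const ((rr ξ ^ (2 * k + 1))⁻¹)
      rw [hA.unique hB, one_mul]
    have f1 := fderiv_mul_pt hw hr (c1 ξ hr) (ξ.1, ξ.2.1, 0)
    have f2 := fderiv_mul_pt hw hr (c2 ξ hr) (0, 0, 1)
    have hz : rrD ξ (0, 0, 1) = 0 := by rw [rrD_apply]; simp
    rw [hdw, (hasFDerivAt_dd hr hξ.1).fderiv] at f1 f2
    simp only [smul_apply, neg_apply, add_apply, smul_eq_mul, tD_apply, rrD_dil hr, hz, g1, g2]
      at f1 f2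
    simp only [hP]
    rw [f1, f2]
    have hSS : √(SS R (pt ξ)) * √(SS R (pt ξ)) = (rr ξ - R) ^ 2 + ξ.2.2 ^ 2 :=
      Real.mul_self_sqrt hξ.1.le
    simp only [hH1, hF1, hF2, hF0]
    set s := √(SS R (pt ξ))
    have e1 : s * (rr ξ ^ (2 * k + 1))⁻¹ = s⁻¹ * ((rr ξ - R) ^ 2 + ξ.2.2 ^ 2) *
        (rr ξ ^ (2 * k + 1))⁻¹ := by
      rw [← hSS]; field_simp
    rw [e1]
    simp only [pt]
    push_cast
    field_simp
    ring
  have i5 : IntegrableOn (fun ξ => w ξ * F0 (pt ξ)) (SSet (k + 1) R ρ) := i0.integrableOn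
  refine ⟨i5, ?_, ?_⟩
  · have i6 : IntegrableOn (fun ξ => 2 * (w ξ * F0 (pt ξ)) - P ξ) (SSet (k + 1) R ρ) :=
      (i5.const_mul 2).sub iP.integrableOn
    exact i6.congr_fun (fun ξ hξ => (hPeq ξ hξ).symm) hS
  · rw [setIntegral_congr_fun hS hPeq, integral_sub (i5.const_mul 2) iP.integrableOn, ePS,
      integral_const_mul, sub_zero]
    rfl

end coarea

/-! ### Comparison with one-dimensional integrals -/

section comparison
variable {n : ℕ}

/-- A substitute for the coarea formula. Integrals of `κ(d)|∇_H d|^p` over the torus are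
comparable to `∫ κ`, uniformly in `κ` supported away from the core. This follows from `flux` applied
to a primitive of `κ`. -/
lemma coarea {p R ρ : ℝ} (hn : 1 ≤ n) (hp : 1 < p) (hρ : 0 < ρ) (hR : ρ < R) :
    ∃ c C : ℝ, 0 < c ∧ 0 < C ∧ ∀ (κ : ℝ → ℝ) (α : ℝ), Continuous κ → (∀ τ, 0 ≤ κ τ) → 0 < α →
      (∀ τ, κ τ ≠ 0 → α ≤ τ ∧ τ < ρ / 2) →
      IntegrableOn (fun ξ => κ (dd R ρ ξ) * GG R (pt ξ) ^ p) (SSet n R ρ) ∧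
      c * (∫ τ in (0 : ℝ)..(ρ / 2), κ τ) ≤
        ∫ ξ in SSet n R ρ, κ (dd R ρ ξ) * GG R (pt ξ) ^ p ∧
      ∫ ξ in SSet n R ρ, κ (dd R ρ ξ) * GG R (pt ξ) ^ p ≤
        C * ∫ τ in (0 : ℝ)..(ρ / 2), κ τ := by
  have hS := (isOpen_SSet (n := n) R ρ).measurableSet
  obtain ⟨m, M, hm, hG⟩ := GG_bounds (n := n) hρ hR
  have hρ2 : 0 < ρ / 2 := by positivity
  have hRm : 0 < R - ρ := by linarith
  have hRp : 0 < R + ρ := by linarith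
  set k := 2 * n - 1
  have hsub2 : SSet n R (ρ / 2) ⊆ SSet n R ρ := fun ξ h => ⟨h.1, h.2.trans_le (by nlinarith)⟩
  have hvol2 : 0 < volume.real (SSet n R (ρ / 2)) := by
    rw [measureReal_congr (SSet_ae_eq_TT R (ρ / 2))]
    exact ENNReal.toReal_pos (volume_TT_pos hρ2 (by linarith) hn).ne'
      (volume_TT_lt_top hρ2 (by linarith)).ne
  have hfin : volume (SSet n R ρ) < ⊤ :=
    (measure_mono fun ξ h => h.2).trans_lt (volume_TT_lt_top hρ hR)
  have hvol : 0 < volume.real (SSet n R ρ) :=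
    hvol2.trans_le (measureReal_mono hsub2 hfin.ne)
  -- `M` is positive as the punctured torus is nonempty
  have hM : 0 < M := by
    obtain ⟨ξ, hξ⟩ : (SSet n R ρ).Nonempty := by
      by_contra h
      rw [not_nonempty_iff_eq_empty] at h
      rw [h] at hvol
      simp at hvol
    exact hm.trans_le ((hG ξ hξ).1.trans (hG ξ hξ).2)
  set c1 := ρ / 2 * ((R + ρ) ^ k)⁻¹
  set C1 := ρ * ((R - ρ) ^ k)⁻¹
  have hc1 : 0 < c1 := by positivity
  have hC1 : 0 < C1 := by positivity
  refine ⟨m ^ p / C1 * (2 * (((R + ρ) ^ k)⁻¹ * volume.real (SSet n R (ρ / 2)))),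
    M ^ p / c1 * (2 * (((R - ρ) ^ k)⁻¹ * volume.real (SSet n R ρ))), by positivity, by positivity, ?_⟩
  intro κ α hκ hκ0 hα hsupp
  have hz : ∀ τ, τ < α → κ τ = 0 := fun τ h => by
    by_contra h'; exact absurd (hsupp τ h').1 (not_le.2 h)
  have hz' : ∀ τ, ρ / 2 ≤ τ → κ τ = 0 := fun τ h => by
    by_contra h'; exact absurd (hsupp τ h').2 (not_lt.2 h)
  set φ : ℝ → ℝ := fun τ => ∫ x in (0 : ℝ)..τ, κ x with hφdef
  set I := ∫ x in (0 : ℝ)..(ρ / 2), κ x with hI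
  have hφκ : ∀ τ, HasDerivAt φ (κ τ) τ := fun τ => hκ.integral_hasStrictDerivAt 0 τ |>.hasDerivAt
  have hφ : ContDiff ℝ 1 φ := by
    rw [contDiff_one_iff_deriv]
    refine ⟨fun τ => (hφκ τ).differentiableAt, ?_⟩
    rw [show deriv φ = κ from funext fun τ => (hφκ τ).deriv]
    exact hκ
  have h0 : ∀ τ, τ < α → φ τ = 0 := by
    intro τ hτ
    simp only [hφdef]
    rw [intervalIntegral.integral_congr (g := fun _ => 0)]
    · simp
    · intro x hx
      exact hz x (lt_of_le_of_lt hx.2 (max_lt hα hτ))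
  have h1 : ∀ τ, ρ / 2 ≤ τ → φ τ = I := by
    intro τ hτ
    simp only [hφdef, hI]
    rw [← intervalIntegral.integral_add_adjacent_intervals (b := ρ / 2)
      (hκ.intervalIntegrable _ _) (hκ.intervalIntegrable _ _),
      intervalIntegral.integral_congr (a := ρ / 2) (g := fun _ => 0)]
    · simp
    · intro x hx
      rw [uIcc_of_le hτ] at hx
      exact hz' x hx.1
  have hmono : Monotone φ := monotone_of_deriv_nonneg (fun τ => (hφκ τ).differentiableAt)
    fun τ => by rw [(hφκ τ).deriv]; exact hκ0 τ
  have hφ0 : ∀ τ, 0 ≤ φ τ := fun τ => by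
    rw [← h0 (min τ 0) (lt_of_le_of_lt (min_le_right _ _) hα)]
    exact hmono (min_le_left _ _)
  have hφI : ∀ τ, φ τ ≤ I := fun τ => by
    rw [← h1 (max τ (ρ / 2)) (le_max_right _ _)]
    exact hmono (le_max_left _ _)
  have hI0 : 0 ≤ I := (hφ0 0).trans (hφI 0)
  obtain ⟨i1, i2, e⟩ := flux hn hρ hR hα (by linarith : ρ / 2 < ρ) hφ hφκ h0 h1
  have bnd : ∀ ξ ∈ SSet n R ρ, κ (dd R ρ ξ) ≠ 0 →
      c1 ≤ √(SS R (pt ξ)) * (rr ξ ^ k)⁻¹ ∧ √(SS R (pt ξ)) * (rr ξ ^ k)⁻¹ ≤ C1 := by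
    intro ξ hξ h
    have hd := hsupp _ h
    have hb := rr_pos_of_SS hρ hξ.2
    have hs1 : ρ / 2 ≤ √(SS R (pt ξ)) := by
      have := hd.2; unfold dd at this; linarith
    have hs2 : √(SS R (pt ξ)) ≤ ρ := by
      have := hd.1; unfold dd at this; linarith
    have hr := rr_pos_of_mem hρ hR hξ
    constructor
    · exact mul_le_mul hs1 (inv_anti₀ (by positivity) (pow_le_pow_left₀ hr.le hb.2.le _))
        (by positivity) (by positivity)
    · exact mul_le_mul hs2 (inv_anti₀ (by positivity) (pow_le_pow_left₀ hRm.le hb.1.le _))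
        (by positivity) (by positivity)
  have up : ∀ ξ ∈ SSet n R ρ, κ (dd R ρ ξ) * GG R (pt ξ) ^ p ≤
      M ^ p / c1 * (κ (dd R ρ ξ) * (√(SS R (pt ξ)) * (rr ξ ^ k)⁻¹)) := by
    intro ξ hξ
    by_cases h : κ (dd R ρ ξ) = 0
    · rw [h]; simp
    · have hb := (bnd ξ hξ h).1
      have hGp : GG R (pt ξ) ^ p ≤ M ^ p :=
        Real.rpow_le_rpow (Real.sqrt_nonneg _) (hG ξ hξ).2 (by linarith)
      have hk := hκ0 (dd R ρ ξ)
      have h2 : M ^ p ≤ M ^ p / c1 * (√(SS R (pt ξ)) * (rr ξ ^ k)⁻¹) := by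
        rw [div_mul_eq_mul_div, le_div_iff₀ hc1]
        exact mul_le_mul_of_nonneg_left hb (by positivity)
      calc _ ≤ κ (dd R ρ ξ) * (M ^ p / c1 * (√(SS R (pt ξ)) * (rr ξ ^ k)⁻¹)) :=
            mul_le_mul_of_nonneg_left (hGp.trans h2) hk
        _ = _ := by ring
  have lo : ∀ ξ ∈ SSet n R ρ, m ^ p / C1 * (κ (dd R ρ ξ) * (√(SS R (pt ξ)) * (rr ξ ^ k)⁻¹)) ≤
      κ (dd R ρ ξ) * GG R (pt ξ) ^ p := by
    intro ξ hξ
    by_cases h : κ (dd R ρ ξ) = 0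
    · rw [h]; simp
    · have hb := (bnd ξ hξ h).2
      have hGp : m ^ p ≤ GG R (pt ξ) ^ p := Real.rpow_le_rpow hm.le (hG ξ hξ).1 (by linarith)
      have hk := hκ0 (dd R ρ ξ)
      have h2 : m ^ p / C1 * (√(SS R (pt ξ)) * (rr ξ ^ k)⁻¹) ≤ m ^ p := by
        rw [div_mul_eq_mul_div, div_le_iff₀ hC1]
        exact mul_le_mul_of_nonneg_left hb (by positivity)
      calc _ = κ (dd R ρ ξ) * (m ^ p / C1 * (√(SS R (pt ξ)) * (rr ξ ^ k)⁻¹)) := by ring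
        _ ≤ _ := mul_le_mul_of_nonneg_left (h2.trans hGp) hk
  have iG : IntegrableOn (fun ξ => κ (dd R ρ ξ) * GG R (pt ξ) ^ p) (SSet n R ρ) := by
    refine Integrable.mono' (i2.const_mul (M ^ p / c1)) ?_
      ((ae_restrict_iff' hS).2 (Eventually.of_forall fun ξ hξ => ?_))
    · refine ContinuousOn.aestronglyMeasurable ?_ hS
      exact (hκ.comp (continuous_dd R ρ)).continuousOn.mul
        (continuousOn_GG.rpow_const fun _ _ => Or.inr (by linarith))
    · rw [Real.norm_of_nonneg (show 0 ≤ κ (dd R ρ ξ) * GG R (pt ξ) ^ p from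
        mul_nonneg (hκ0 _) (Real.rpow_nonneg (Real.sqrt_nonneg _) _))]
      exact up ξ hξ
  refine ⟨iG, ?_, ?_⟩
  · have a1 := setIntegral_mono_on (i2.const_mul (m ^ p / C1)) iG hS lo
    rw [integral_const_mul, e] at a1
    have a2 : I * (((R + ρ) ^ k)⁻¹ * volume.real (SSet n R (ρ / 2))) ≤
        ∫ ξ in SSet n R ρ, φ (dd R ρ ξ) * (rr ξ ^ k)⁻¹ := by
      calc I * (((R + ρ) ^ k)⁻¹ * volume.real (SSet n R (ρ / 2)))
          = ∫ _ξ in SSet n R (ρ / 2), I * ((R + ρ) ^ k)⁻¹ := by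
            rw [setIntegral_const, smul_eq_mul]; ring
        _ ≤ ∫ ξ in SSet n R (ρ / 2), φ (dd R ρ ξ) * (rr ξ ^ k)⁻¹ := by
            refine setIntegral_mono_on (integrableOn_const
              ((measure_mono hsub2).trans_lt hfin).ne) (i1.mono_set hsub2)
              (isOpen_SSet R (ρ / 2)).measurableSet fun ξ hξ => ?_
            have hb := rr_pos_of_SS hρ (hsub2 hξ).2
            have hr := rr_pos_of_mem hρ hR (hsub2 hξ)
            have hs : √(SS R (pt ξ)) < ρ / 2 := (Real.sqrt_lt' hρ2).2 hξ.2
            rw [h1 _ (by unfold dd; linarith)]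
            exact mul_le_mul_of_nonneg_left
              (inv_anti₀ (by positivity) (pow_le_pow_left₀ hr.le hb.2.le _)) hI0
        _ ≤ _ := by
            refine setIntegral_mono_set i1 ((ae_restrict_iff' hS).2
              (Eventually.of_forall fun ξ hξ => ?_)) hsub2.eventuallyLE
            exact mul_nonneg (hφ0 _) (inv_nonneg.2 (pow_nonneg (rr_nonneg ξ) _))
    refine le_trans (le_of_eq ?_) ((mul_le_mul_of_nonneg_left
      (mul_le_mul_of_nonneg_left a2 zero_le_two) (by positivity)).trans a1)
    ring
  · have a1 := setIntegral_mono_on iG (i2.const_mul (M ^ p / c1)) hS up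
    rw [integral_const_mul, e] at a1
    have a2 : ∫ ξ in SSet n R ρ, φ (dd R ρ ξ) * (rr ξ ^ k)⁻¹ ≤
        I * (((R - ρ) ^ k)⁻¹ * volume.real (SSet n R ρ)) := by
      calc _ ≤ ∫ _ξ in SSet n R ρ, I * ((R - ρ) ^ k)⁻¹ := by
            refine setIntegral_mono_on i1 (integrableOn_const hfin.ne) hS fun ξ hξ => ?_
            have hb := rr_pos_of_SS hρ hξ.2
            have hr := rr_pos_of_mem hρ hR hξ
            exact mul_le_mul (hφI _) (inv_anti₀ (by positivity)
              (pow_le_pow_left₀ hRm.le hb.1.le _)) (by positivity) hI0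
        _ = _ := by rw [setIntegral_const, smul_eq_mul]; ring
    refine (a1.trans (mul_le_mul_of_nonneg_left
      (mul_le_mul_of_nonneg_left a2 zero_le_two) (by positivity))).trans (le_of_eq ?_)
    ring

end comparison

/-! ### Profiles on a logarithmic scale -/

section profile

/-- The density `τ⁻¹ h(log τ / L)`, extended continuously by zero to the left of `e^{-3L}`. -/
def kap (L : ℝ) (h : ℝ → ℝ) (τ : ℝ) : ℝ :=
  (max τ (exp (-3 * L)))⁻¹ * h (log (max τ (exp (-3 * L))) / L)

lemma continuous_kap (L : ℝ) {h : ℝ → ℝ} (hh : Continuous h) : Continuous (kap L h) := by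
  have h1 : Continuous fun τ : ℝ => max τ (exp (-3 * L)) := by fun_prop
  have h2 : ∀ τ : ℝ, max τ (exp (-3 * L)) ≠ 0 := fun τ =>
    (lt_of_lt_of_le (exp_pos _) (le_max_right _ _)).ne'
  exact (h1.inv₀ h2).mul (hh.comp ((h1.log h2).div_const L))

lemma kap_nonneg (L : ℝ) {h : ℝ → ℝ} (h0 : ∀ x, 0 ≤ h x) (τ : ℝ) : 0 ≤ kap L h τ :=
  mul_nonneg (inv_nonneg.2 ((exp_pos _).le.trans (le_max_right _ _))) (h0 _)

lemma kap_supp {L : ℝ} (hL : 0 < L) {h : ℝ → ℝ} (hs : ∀ x, h x ≠ 0 → -3 < x ∧ x < -1) (τ : ℝ)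
    (hτ : kap L h τ ≠ 0) : exp (-3 * L) < τ ∧ τ < exp (-L) := by
  have h1 := hs _ (right_ne_zero_of_mul hτ)
  have hpos : 0 < max τ (exp (-3 * L)) := lt_of_lt_of_le (exp_pos _) (le_max_right _ _)
  rw [lt_div_iff₀ hL, div_lt_iff₀ hL, Real.lt_log_iff_exp_lt hpos, Real.log_lt_iff_lt_exp hpos] at h1
  refine ⟨?_, ?_⟩
  · rcases lt_max_iff.1 h1.1 with h | h
    · exact h
    · exact absurd h (lt_irrefl _)
  · exact lt_of_le_of_lt (le_max_left _ _) (by rw [← neg_one_mul]; exact h1.2)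

lemma kap_eq {L : ℝ} (hL : 0 < L) {h : ℝ → ℝ} (hs : ∀ x, h x ≠ 0 → -3 < x ∧ x < -1) {τ : ℝ}
    (hτ : 0 < τ) : kap L h τ = τ⁻¹ * h (log τ / L) := by
  rcases le_or_gt (exp (-3 * L)) τ with hle | hlt
  · unfold kap; rw [max_eq_left hle]
  · have h1 : kap L h τ = 0 := by
      by_contra h'
      exact absurd (kap_supp hL hs τ h').1 (not_lt.2 hlt.le)
    have h2 : h (log τ / L) = 0 := by
      by_contra h'
      have := (hs _ h').1
      rw [lt_div_iff₀ hL, Real.lt_log_iff_exp_lt hτ] at this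
      exact absurd this (not_lt.2 hlt.le)
    rw [h1, h2, mul_zero]

/-- After `τ = e^{Lx}` the integral is `L ∫ h`, and `h = 1` on an interval of length `1/2`. -/
lemma integral_kap_ge {L b : ℝ} (hL : 0 < L) (hb : exp (-L) < b) {h : ℝ → ℝ} (hh : Continuous h)
    (h0 : ∀ x, 0 ≤ h x) (hs : ∀ x, h x ≠ 0 → -3 < x ∧ x < -1) (h1 : ∀ x, |x + 2| ≤ 1 / 4 → h x = 1) :
    L / 2 ≤ ∫ τ in (0 : ℝ)..b, kap L h τ := by
  have e1 : exp (-(9 / 4) * L) ≤ exp (-(7 / 4) * L) := exp_le_exp.2 (by linarith)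
  have e2 : exp (-(7 / 4) * L) ≤ b := (exp_le_exp.2 (by linarith)).trans hb.le
  have hk := continuous_kap L hh
  have h2 : ∫ τ in exp (-(9 / 4) * L)..exp (-(7 / 4) * L), kap L h τ ≤ ∫ τ in (0 : ℝ)..b, kap L h τ :=
    intervalIntegral.integral_mono_interval (exp_pos _).le e1 e2
      (Eventually.of_forall fun τ => kap_nonneg L h0 τ) (hk.intervalIntegrable _ _)
  refine le_trans (le_of_eq ?_) h2
  rw [intervalIntegral.integral_congr (g := fun τ => τ⁻¹), integral_inv_of_pos (exp_pos _) (exp_pos _),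
    ← Real.exp_sub, Real.log_exp]
  · ring
  · intro τ hτ
    rw [uIcc_of_le e1] at hτ
    have hτ0 : 0 < τ := lt_of_lt_of_le (exp_pos _) hτ.1
    simp only
    rw [kap_eq hL hs hτ0, h1, mul_one]
    have l1 := (Real.le_log_iff_exp_le hτ0).2 hτ.1
    have l2 := (Real.log_le_iff_le_exp hτ0).2 hτ.2
    have l3 : -(9 / 4) ≤ log τ / L := by rwa [le_div_iff₀ hL]
    have l4 : log τ / L ≤ -(7 / 4) := by rwa [div_le_iff₀ hL]
    rw [abs_le]
    constructor <;> linarith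

/-- After `τ = e^{Lx}` the integral is `L ∫ h`, over an interval of length `2`. -/
lemma integral_kap_le {L b B : ℝ} (hL : 0 < L) (hb : exp (-L) < b) {h : ℝ → ℝ} (hh : Continuous h)
    (hs : ∀ x, h x ≠ 0 → -3 < x ∧ x < -1) (hB : ∀ x, h x ≤ B) :
    ∫ τ in (0 : ℝ)..b, kap L h τ ≤ 2 * L * B := by
  have hk := continuous_kap L hh
  have e1 : exp (-3 * L) ≤ exp (-L) := exp_le_exp.2 (by linarith)
  rw [← intervalIntegral.integral_add_adjacent_intervals (b := exp (-L))
      (hk.intervalIntegrable _ _) (hk.intervalIntegrable _ _),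
    ← intervalIntegral.integral_add_adjacent_intervals (b := exp (-3 * L))
      (hk.intervalIntegrable _ _) (hk.intervalIntegrable _ _),
    intervalIntegral.integral_congr (a := 0) (g := fun _ => 0),
    intervalIntegral.integral_congr (b := b) (g := fun _ => 0)]
  · have h1 : ∫ τ in exp (-3 * L)..exp (-L), kap L h τ ≤ ∫ τ in exp (-3 * L)..exp (-L), τ⁻¹ * B := by
      refine intervalIntegral.integral_mono_on e1 (hk.intervalIntegrable _ _) ?_ ?_
      · refine ContinuousOn.intervalIntegrable ?_
        rw [uIcc_of_le e1]
        exact (continuousOn_id.inv₀ fun x hx => (lt_of_lt_of_le (exp_pos _) hx.1).ne').mul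
          continuousOn_const
      · intro τ hτ
        have hτ0 : 0 < τ := lt_of_lt_of_le (exp_pos _) hτ.1
        rw [kap_eq hL hs hτ0]
        exact mul_le_mul_of_nonneg_left (hB _) (inv_pos.2 hτ0).le
    rw [intervalIntegral.integral_mul_const, integral_inv_of_pos (exp_pos _) (exp_pos _),
      ← Real.exp_sub, Real.log_exp] at h1
    simp only [intervalIntegral.integral_zero, zero_add, add_zero]
    linarith
  · intro τ hτ
    rw [uIcc_of_le hb.le] at hτ
    by_contra h'
    exact absurd (kap_supp hL hs τ h').2 (not_lt.2 hτ.1)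
  · intro τ hτ
    rw [uIcc_of_le (exp_pos _).le] at hτ
    by_contra h'
    exact absurd (kap_supp hL hs τ h').1 (not_lt.2 hτ.2)

/-- A bump function at `-2` supported in `(-3, -1)`, so that `ψ(log τ / L)` lives on
`e^{-3L} < τ < e^{-L}`. -/
lemma exists_bump : ∃ (ψ : ℝ → ℝ) (K : ℝ), ContDiff ℝ (⊤ : ℕ∞) ψ ∧ (∀ x, 0 ≤ ψ x) ∧
    (∀ x, |x + 2| ≤ 1 / 4 → ψ x = 1) ∧ (∀ x, ψ x ≠ 0 → -3 < x ∧ x < -1) ∧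
    (∀ x, deriv ψ x ≠ 0 → -3 < x ∧ x < -1) ∧ 0 < K ∧ ∀ x, |deriv ψ x| ≤ K := by
  let ψ : ContDiffBump (-2 : ℝ) := ⟨1 / 4, 1 / 2, by norm_num, by norm_num⟩
  have hts : tsupport ψ ⊆ {x | -3 < x ∧ x < -1} := by
    rw [ψ.tsupport_eq]
    intro x hx
    rw [Metric.mem_closedBall, Real.dist_eq, abs_le] at hx
    have : ψ.rOut = 1 / 2 := rfl
    rw [this] at hx
    constructor <;> linarith [hx.1, hx.2]
  have hd : ∀ x, deriv ψ x ≠ 0 → x ∈ tsupport ψ := fun x hx =>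
    support_deriv_subset (f := ψ) hx
  have hc : Continuous (deriv ψ) := ψ.contDiff.continuous_deriv (n := 1) le_rfl
  have hcs : HasCompactSupport (deriv ψ) := ψ.hasCompactSupport.deriv
  obtain ⟨K, hK⟩ := hc.bounded_above_of_compact_support hcs
  refine ⟨ψ, max K 1, ψ.contDiff, fun x => ψ.nonneg, ?_, fun x hx => hts (subset_tsupport _ hx),
    fun x hx => hts (hd x hx), by positivity, fun x => (hK x).trans (le_max_left _ _)⟩
  intro x hx
  refine ψ.one_of_mem_closedBall ?_
  rw [Metric.mem_closedBall, Real.dist_eq, sub_neg_eq_add]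
  exact hx

end profile

/-! ### Sharpness -/

section sharpness
variable {n : ℕ}

/-- Convexity of `s ↦ s ^ p`, with the loss in front of `|a| ^ p` arbitrarily close to `1`. -/
lemma abs_add_rpow_le {p l : ℝ} (hp : 1 < p) (h0 : 0 < l) (h1 : l < 1) (a b : ℝ) :
    |a + b| ^ p ≤ (1 - l) ^ (1 - p) * |a| ^ p + l ^ (1 - p) * |b| ^ p := by
  have h2 : 0 < 1 - l := by linarith
  have key := (convexOn_rpow hp.le).2 (x := |a| / (1 - l)) (y := |b| / l)
    (show (0 : ℝ) ≤ _ by positivity) (show (0 : ℝ) ≤ _ by positivity) h2.le h0.le (by ring)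
  simp only [smul_eq_mul] at key
  rw [mul_div_cancel₀ _ h2.ne', mul_div_cancel₀ _ h0.ne', div_rpow (abs_nonneg _) h2.le,
    div_rpow (abs_nonneg _) h0.le] at key
  have e1 : (1 - l) * (|a| ^ p / (1 - l) ^ p) = (1 - l) ^ (1 - p) * |a| ^ p := by
    rw [rpow_sub h2, rpow_one]; ring
  have e2 : l * (|b| ^ p / l ^ p) = l ^ (1 - p) * |b| ^ p := by
    rw [rpow_sub h0, rpow_one]; ring
  rw [e1, e2] at key
  exact (rpow_le_rpow (abs_nonneg _) (abs_add_le a b) (by linarith)).trans key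

/-- The profile `τ ^ ((p-1)/p) ψ(log τ / L)`: the virtual extremal of the one-dimensional Hardy
inequality, cut off on a logarithmic scale. -/
def prof (p L : ℝ) (ψ : ℝ → ℝ) (τ : ℝ) : ℝ :=
  if τ ≤ 0 then 0 else τ ^ ((p - 1) / p) * ψ (log τ / L)

lemma prof_eq {p L : ℝ} {ψ : ℝ → ℝ} {τ : ℝ} (hτ : 0 < τ) :
    prof p L ψ τ = τ ^ ((p - 1) / p) * ψ (log τ / L) := if_neg (not_le.2 hτ)

lemma prof_eventuallyEq {p L : ℝ} {ψ : ℝ → ℝ} {τ : ℝ} (hτ : 0 < τ) :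
    prof p L ψ =ᶠ[𝓝 τ] fun s => s ^ ((p - 1) / p) * ψ (log s / L) := by
  filter_upwards [lt_mem_nhds hτ] with s hs using prof_eq hs

lemma prof_supp {p L : ℝ} (hL : 0 < L) {ψ : ℝ → ℝ} (hs : ∀ x, ψ x ≠ 0 → -3 < x ∧ x < -1) {τ : ℝ}
    (hτ : prof p L ψ τ ≠ 0) : exp (-3 * L) < τ ∧ τ < exp (-L) := by
  have h0 : 0 < τ := by
    by_contra h
    exact hτ (if_pos (not_lt.1 h))
  rw [prof_eq h0] at hτ
  refine kap_supp hL hs τ ?_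
  rw [kap_eq hL hs h0]
  exact mul_ne_zero (inv_ne_zero h0.ne') (right_ne_zero_of_mul hτ)

lemma contDiffAt_prof {p L : ℝ} {ψ : ℝ → ℝ} (hψ : ContDiff ℝ (⊤ : ℕ∞) ψ) {τ : ℝ} (hτ : 0 < τ) :
    ContDiffAt ℝ (⊤ : ℕ∞) (prof p L ψ) τ := by
  refine ContDiffAt.congr_of_eventuallyEq ?_ (prof_eventuallyEq hτ)
  exact (contDiffAt_id.rpow_const_of_ne hτ.ne').mul
    (hψ.contDiffAt.comp τ ((contDiffAt_id.log hτ.ne').div_const L))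

lemma hasDerivAt_prof {p L : ℝ} (hp : 1 < p) {ψ : ℝ → ℝ} (hψ : ContDiff ℝ (⊤ : ℕ∞) ψ)
    {τ : ℝ} (hτ : 0 < τ) :
    HasDerivAt (prof p L ψ) (τ ^ (-(1 / p)) *
      ((p - 1) / p * ψ (log τ / L) + deriv ψ (log τ / L) / L)) τ := by
  refine HasDerivAt.congr_of_eventuallyEq ?_ (prof_eventuallyEq hτ)
  have h1 : HasDerivAt ψ (deriv ψ (log τ / L)) (log τ / L) :=
    (hψ.differentiable (by simp) _).hasDerivAt
  have h2 := (hasDerivAt_rpow_const (x := τ) (p := (p - 1) / p) (Or.inl hτ.ne')).mul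
    (h1.comp τ ((hasDerivAt_log hτ.ne').div_const L))
  refine h2.congr_deriv ?_
  have hp0 : p ≠ 0 := by linarith
  have e1 : (p - 1) / p - 1 = -(1 / p) := by field_simp; ring
  have e2 : τ ^ ((p - 1) / p) = τ ^ (-(1 / p)) * τ := by
    rw [← rpow_add_one hτ.ne']; congr 1; field_simp; ring
  simp only [e1, Function.comp]
  rw [e2]
  field_simp

/-- For `u = d^{(p-1)/p} ψ(log d / L)` the numerator is at most `(1-l)^{1-p}((p-1)/p)^p + O(L^{-p})`
times the denominator; `l` is chosen small, then `L` large. -/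
lemma sharp {p R ρ : ℝ} (hn : 1 ≤ n) (hp : 1 < p) (hρ : 0 < ρ) (hR : ρ < R) {w : ℝ}
    (hw : ((p - 1) / p) ^ p < w) :
    ∃ u : Hpt n → ℝ, IsTest (TT n R ρ) u ∧ u ≠ 0 ∧
      (∫ ξ in SSet n R ρ, NN p u ξ) / (∫ ξ in SSet n R ρ, DD p R ρ u ξ) < w := by
  have hS := (isOpen_SSet (n := n) R ρ).measurableSet
  have hp0 : 0 < p := by linarith
  have hq : 0 < (p - 1) / p := div_pos (by linarith) hp0
  obtain ⟨c, C, hc, hC, hco⟩ := coarea (n := n) hn hp hρ hR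
  obtain ⟨ψ, K, hψ, hψ0, hψ1, hψs, hψs', hK, hψK⟩ := exists_bump
  obtain ⟨l, hlw, hl0, hl1⟩ : ∃ l : ℝ, (1 - l) ^ (1 - p) * ((p - 1) / p) ^ p < w ∧ 0 < l ∧ l < 1 := by
    have hcont : ContinuousAt (fun l : ℝ => (1 - l) ^ (1 - p) * ((p - 1) / p) ^ p) 0 := by
      refine ContinuousAt.mul (ContinuousAt.rpow_const (by fun_prop) (Or.inl (by norm_num)))
        continuousAt_const
    have h1 : ∀ᶠ l in 𝓝 (0 : ℝ), (1 - l) ^ (1 - p) * ((p - 1) / p) ^ p < w :=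
      hcont.eventually_lt continuousAt_const (by simpa using hw)
    have h2 : ∀ᶠ l in 𝓝[>] (0 : ℝ), 0 < l ∧ l < 1 := Ioo_mem_nhdsGT one_pos
    exact ((h1.filter_mono nhdsWithin_le_nhds).and h2).exists
  set A := (1 - l) ^ (1 - p) * ((p - 1) / p) ^ p with hA
  set B := l ^ (1 - p) * (C * (2 * K ^ p)) * (2 / c) with hB
  obtain ⟨L, hLw, hLρ, hL⟩ : ∃ L : ℝ, A + B * (L ^ p)⁻¹ < w ∧ exp (-L) < ρ / 2 ∧ 0 < L := by
    have t1 : Tendsto (fun L : ℝ => A + B * (L ^ p)⁻¹) atTop (𝓝 (A + B * 0)) :=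
      tendsto_const_nhds.add ((tendsto_rpow_atTop hp0).inv_tendsto_atTop.const_mul B)
    have h1 := t1.eventually_lt_const (u := w) (by simpa using hlw)
    have h2 : ∀ᶠ L : ℝ in atTop, exp (-L) < ρ / 2 :=
      (tendsto_exp_atBot.comp tendsto_neg_atTop_atBot).eventually_lt_const (by positivity)
    exact (h1.and (h2.and (eventually_gt_atTop 0))).exists
  obtain ⟨hu, huc, hus⟩ := comp_dd_smooth (n := n) (m := (⊤ : ℕ∞)) (R := R) (c := 0) hρ hR
    (exp_pos (-3 * L)) (hLρ.trans (by linarith)) (φ := prof p L ψ) (fun τ hτ => contDiffAt_prof hψ hτ)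
    (fun τ hτ => by
      by_contra h
      exact absurd (prof_supp hL hψs h).1 (not_lt.2 hτ.le))
    (fun τ hτ => by
      by_contra h
      exact absurd (prof_supp hL hψs h).2 (not_lt.2 hτ))
  set u : Hpt n → ℝ := fun ξ => prof p L ψ (dd R ρ ξ) with hudef
  set h₁ : ℝ → ℝ := fun x => ψ x ^ p with hh₁
  set h₂ : ℝ → ℝ := fun x => |deriv ψ x| ^ p with hh₂
  have hc1 : Continuous h₁ := hψ.continuous.rpow_const fun _ => Or.inr hp0.le
  have hc2 : Continuous h₂ :=
    (hψ.continuous_deriv (by simp)).abs.rpow_const fun _ => Or.inr hp0.le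
  have hp1 : ∀ x, 0 ≤ h₁ x := fun x => rpow_nonneg (hψ0 x) _
  have hp2 : ∀ x, 0 ≤ h₂ x := fun x => rpow_nonneg (abs_nonneg _) _
  have hs1 : ∀ x, h₁ x ≠ 0 → -3 < x ∧ x < -1 := fun x hx => hψs x fun h => hx (by
    simp [hh₁, h, zero_rpow hp0.ne'])
  have hs2 : ∀ x, h₂ x ≠ 0 → -3 < x ∧ x < -1 := fun x hx => hψs' x fun h => hx (by
    simp [hh₂, h, zero_rpow hp0.ne'])
  have sup : ∀ h : ℝ → ℝ, (∀ x, h x ≠ 0 → -3 < x ∧ x < -1) → ∀ τ, kap L h τ ≠ 0 →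
      exp (-3 * L) ≤ τ ∧ τ < ρ / 2 := fun h hs τ hτ =>
    ⟨(kap_supp hL hs τ hτ).1.le, (kap_supp hL hs τ hτ).2.trans hLρ⟩
  obtain ⟨i1, lo1, -⟩ := hco (kap L h₁) _ (continuous_kap L hc1) (kap_nonneg L hp1) (exp_pos _)
    (sup h₁ hs1)
  obtain ⟨i2, -, up2⟩ := hco (kap L h₂) _ (continuous_kap L hc2) (kap_nonneg L hp2) (exp_pos _)
    (sup h₂ hs2)
  have b1 := integral_kap_ge hL hLρ hc1 hp1 hs1 (fun x hx => by simp [hh₁, hψ1 x hx])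
  have b2 := integral_kap_le hL hLρ hc2 hs2 (B := K ^ p)
    (fun x => rpow_le_rpow (abs_nonneg _) (hψK x) hp0.le)
  have hD : ∫ ξ in SSet n R ρ, DD p R ρ u ξ =
      ∫ ξ in SSet n R ρ, kap L h₁ (dd R ρ ξ) * GG R (pt ξ) ^ p := by
    refine setIntegral_congr_fun hS fun ξ hξ => ?_
    have hd := dd_pos hρ hξ.2
    simp only [DD, hudef]
    rw [kap_eq hL hs1 hd, prof_eq hd, abs_mul, abs_of_nonneg (rpow_nonneg hd.le _),
      abs_of_nonneg (hψ0 _), mul_rpow (rpow_nonneg hd.le _) (hψ0 _), ← rpow_mul hd.le,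
      div_mul_cancel₀ _ hp0.ne', rpow_sub hd, rpow_one]
    have := (rpow_pos_of_pos hd p).ne'
    simp only [hh₁]
    field_simp
  have hN : ∀ ξ ∈ SSet n R ρ, NN p u ξ ≤ A * (kap L h₁ (dd R ρ ξ) * GG R (pt ξ) ^ p) +
      l ^ (1 - p) * (L ^ p)⁻¹ * (kap L h₂ (dd R ρ ξ) * GG R (pt ξ) ^ p) := by
    intro ξ hξ
    have hd := dd_pos hρ hξ.2
    have hr := rr_pos_of_mem hρ hR hξ
    have hG := GG_pos (z := pt ξ) hr hξ.1
    simp only [NN, hudef]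
    rw [hgradNorm_comp_dd hr hξ.1 (hasDerivAt_prof hp hψ hd), kap_eq hL hs1 hd, kap_eq hL hs2 hd,
      mul_rpow (abs_nonneg _) hG.le, abs_mul, mul_rpow (abs_nonneg _) (abs_nonneg _),
      abs_of_nonneg (rpow_nonneg hd.le _), ← rpow_mul hd.le]
    have e : -(1 / p) * p = -1 := by field_simp
    rw [e, rpow_neg_one]
    have key := abs_add_rpow_le hp hl0 hl1 ((p - 1) / p * ψ (log (dd R ρ ξ) / L))
      (deriv ψ (log (dd R ρ ξ) / L) / L)
    rw [abs_mul, abs_of_pos hq, abs_of_nonneg (hψ0 _), mul_rpow hq.le (hψ0 _), abs_div,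
      abs_of_pos hL, div_rpow (abs_nonneg _) hL.le] at key
    have hx : 0 ≤ (dd R ρ ξ)⁻¹ * GG R (pt ξ) ^ p :=
      mul_nonneg (inv_nonneg.2 hd.le) (rpow_nonneg hG.le _)
    have := mul_le_mul_of_nonneg_left key hx
    simp only [hh₁, hh₂, hA]
    refine le_trans (le_of_eq (by ring)) (this.trans (le_of_eq ?_))
    ring
  have hNi : ∫ ξ in SSet n R ρ, NN p u ξ ≤
      A * (∫ ξ in SSet n R ρ, DD p R ρ u ξ) + l ^ (1 - p) * (L ^ p)⁻¹ *
        ∫ ξ in SSet n R ρ, kap L h₂ (dd R ρ ξ) * GG R (pt ξ) ^ p := by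
    have hu1 : ContDiff ℝ 1 u := hu.of_le (by exact_mod_cast le_top)
    have := setIntegral_mono_on (integrable_NN hp hu1 huc).integrableOn
      ((i1.const_mul A).add (i2.const_mul (l ^ (1 - p) * (L ^ p)⁻¹))) hS hN
    refine this.trans (le_of_eq ?_)
    rw [hD, ← integral_const_mul, ← integral_const_mul]
    exact integral_add (i1.const_mul A) (i2.const_mul _)
  have hDlo : c * (L / 2) ≤ ∫ ξ in SSet n R ρ, DD p R ρ u ξ := by
    rw [hD]
    exact (mul_le_mul_of_nonneg_left b1 hc.le).trans lo1
  have hDpos : 0 < ∫ ξ in SSet n R ρ, DD p R ρ u ξ := lt_of_lt_of_le (by positivity) hDlo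
  refine ⟨u, ⟨hu, huc, hus⟩, ?_, ?_⟩
  · intro h
    rw [h] at hDpos
    simp [DD, zero_rpow hp0.ne'] at hDpos
  · rw [div_lt_iff₀ hDpos]
    have hLp := rpow_pos_of_pos hL p
    have hlp := rpow_pos_of_pos hl0 (1 - p)
    have s1 : ∫ ξ in SSet n R ρ, kap L h₂ (dd R ρ ξ) * GG R (pt ξ) ^ p ≤
        C * (2 * K ^ p) * (2 / c) * ∫ ξ in SSet n R ρ, DD p R ρ u ξ := by
      have hKp := rpow_pos_of_pos hK p
      calc _ ≤ C * (2 * L * K ^ p) := up2.trans (mul_le_mul_of_nonneg_left b2 hC.le)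
        _ = C * (2 * K ^ p) * (2 / c) * (c * (L / 2)) := by field_simp
        _ ≤ _ := mul_le_mul_of_nonneg_left hDlo (by positivity)
    have s2 := mul_le_mul_of_nonneg_left s1 (show 0 ≤ l ^ (1 - p) * (L ^ p)⁻¹ by positivity)
    calc _ ≤ _ := hNi
      _ ≤ (A + B * (L ^ p)⁻¹) * ∫ ξ in SSet n R ρ, DD p R ρ u ξ := by
        refine (add_le_add_right s2 _).trans (le_of_eq ?_)
        rw [hB]; ring
      _ < _ := mul_lt_mul_of_pos_right hLw hDpos

/-- The best constant, under the two inequalities between `R` and `ρ` that the proof needs. -/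
lemma hardy_const {p R ρ : ℝ} (hn : 1 ≤ n) (hp : 1 < p) (hρ : 0 < ρ) (hR : ρ < R)
    (h1 : (2 * (n : ℝ) - 1) * ρ ≤ 4 * (R - ρ) ^ 3) (h2 : (2 * (n : ℝ) + p - 2) * ρ ≤ R) :
    sInf {q : ℝ | ∃ u : Hpt n → ℝ, IsTest (TT n R ρ) u ∧ u ≠ 0 ∧
        q = (∫ ξ in TT n R ρ, hgradNorm u ξ ^ p) /
            (∫ ξ in TT n R ρ, (hgradNorm (dd R ρ : Hpt n → ℝ) ξ ^ p / dd R ρ ξ ^ p) * |u ξ| ^ p)}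
      = ((p - 1) / p) ^ p := by
  have hS := (isOpen_SSet (n := n) R ρ).measurableSet
  have eN : ∀ u : Hpt n → ℝ, ∫ ξ in TT n R ρ, hgradNorm u ξ ^ p = ∫ ξ in SSet n R ρ, NN p u ξ :=
    fun u => setIntegral_congr_set (SSet_ae_eq_TT R ρ).symm
  have eD : ∀ u : Hpt n → ℝ,
      ∫ ξ in TT n R ρ, (hgradNorm (dd R ρ : Hpt n → ℝ) ξ ^ p / dd R ρ ξ ^ p) * |u ξ| ^ p =
        ∫ ξ in SSet n R ρ, DD p R ρ u ξ := by
    intro u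
    rw [setIntegral_congr_set (SSet_ae_eq_TT R ρ).symm]
    refine setIntegral_congr_fun hS fun ξ hξ => ?_
    simp only [DD]
    rw [hgradNorm_dd (rr_pos_of_mem hρ hR hξ) hξ.1]
  simp only [eN, eD]
  refine csInf_eq_of_forall_ge_of_forall_gt_exists_lt ?_ ?_ ?_
  · obtain ⟨u, hu, h0, -⟩ := sharp (n := n) hn hp hρ hR (lt_add_one (((p - 1) / p) ^ p))
    exact ⟨_, u, hu, h0, rfl⟩
  · rintro q ⟨u, ⟨hu, hc, hs⟩, h0, rfl⟩
    rw [le_div_iff₀ (setIntegral_DD_pos hp hρ hR hu.continuous hc hs h0)]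
    exact hardy hp hρ hR h1 h2 hn (hu.of_le (by exact_mod_cast le_top)) hc hs
  · intro w hw
    obtain ⟨u, hu, h0, h⟩ := sharp (n := n) hn hp hρ hR hw
    exact ⟨_, ⟨u, hu, h0, rfl⟩, h⟩

end sharpness

end TorusHardy

open Heis in
/-- on the torus T, the best constant in the Hardy inequality with respect to the
Euclidean distance to the boundary equals ((p−1)/p)^p. -/
theorem torus_hardy_sharp (n : ℕ) (hn : 1 ≤ n) (p R ρ : ℝ) (hp : 1 < p)
    (hρ : 0 < ρ) (hRρ : ρ < R) (β : ℝ)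
    (hβ : (p < 2 ∧
        β = max ((2 * (n : ℝ) + p - 2) / (p - 1)) ((2 * (n : ℝ) - p + 1) / (2 * (2 - p)))) ∨
      (p = 2 ∧ β = 2 * (n : ℝ)) ∨
      ((13 + Real.sqrt (32 * (n : ℝ) - 7)) / 8 ≤ p ∧ β = 2 * (n : ℝ) + p - 2) ∨
      (2 < p ∧ p < (13 + Real.sqrt (32 * (n : ℝ) - 7)) / 8 ∧
        ∃ a : ℝ, 0 < a ∧
          (2 * (n : ℝ) + p - 3) ^ 2 * a ^ 2 +
              4 * ((p - 2) * (2 * (n : ℝ) + p - 3) + (p - 1) * (2 * (n : ℝ) - 1)) * a -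
              4 * (2 * p - 3) = 0 ∧
          β = 1 + 1 / a))
    (hR1 : ρ + ((2 * (n : ℝ) - 1) * ρ / 4) ^ ((1 : ℝ) / 3) ≤ R) (hR2 : β * ρ ≤ R) :
    ∀ T : Set (Hpt n), T = {ξ : Hpt n | (rr ξ - R) ^ 2 + ξ.2.2 ^ 2 < ρ ^ 2} →
    ∀ d : Hpt n → ℝ, d = (fun η => ρ - Real.sqrt ((rr η - R) ^ 2 + η.2.2 ^ 2)) →
      sInf {q : ℝ | ∃ u : Hpt n → ℝ, IsTest T u ∧ u ≠ 0 ∧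
          q = (∫ ξ in T, hgradNorm u ξ ^ p) /
              (∫ ξ in T, (hgradNorm d ξ ^ p / d ξ ^ p) * |u ξ| ^ p)}
        = ((p - 1) / p) ^ p := by
  rintro T rfl d rfl
  have hn' : (1 : ℝ) ≤ n := by exact_mod_cast hn
  exact TorusHardy.hardy_const hn hp hρ hRρ (TorusHardy.cube_bound hn' hρ hR1)
    ((mul_le_mul_of_nonneg_right (TorusHardy.beta_ge hn' hp hβ) hρ.le).trans hR2)
end
end

section
/- Let Π₀ = {(x,y,t) ∈ ℍⁿ : t > 0} and let d_N(ξ) = inf{ N(ξ'⁻¹ξ) : ξ' ∈ ∂Π₀ }, which depends only on r = √(|x|²+|y|²) and t. Then for every fixed r ≠ 0 there exist constants C > 0 and δ > 0 such that for all 0 < t < δ: (i) |d_N(r,t) − t/(2r)| ≤ C t³; and (ii) | |∇_{ℍⁿ}d_N(r,t)| − 1 | ≤ C t². -/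
/-!
Left translation turns `d_N ^ 4`, for the plane `t = 0`, into the minimum of `S ^ 2 + (t + 2 P) ^ 2`, where
`S` is the squared length of the horizontal displacement and `P` its pairing with `(y, -x)`. Cauchy–
Schwarz gives `P ^ 2 ≤ S R` with `R = |x|² + |y|²`, so this is a one-variable problem. Its minimiser
is the displacement `(-σ y, σ x)`, where `σ` solves the cubic equation `σ ^ 3 + 2 σ = t / R`, and

  `d_N = √R * σ * k`, with `k = (1 + σ ^ 2) ^ (1 / 4)` (`distN_eq`, from `quartic_bound` and `pairing_sq_le`).

The cubic is a homeomorphism of `ℝ` with nonvanishing derivative, so `σ` is a differentiable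
function of `t / R`, and `σ k` has derivative `1 / (2 k ^ 3)` (`hasDerivAt_profile`).
The chain rule then gives exactly `|∇ d_N| = 1 / k` (`hgradNorm_eq`). Both estimates follow
from these closed formulas and from `0 ≤ σ ≤ t / R` and `1 ≤ k ≤ 1 + σ ^ 2`.
-/

open MeasureTheory Real Set Filter

noncomputable section

namespace Heis

variable {n : ℕ}

/-! ### The cubic equation and the one-variable profile -/

lemma cubic_strictMono : StrictMono (fun s : ℝ => s ^ 3 + 2 * s) := by
  intro a b h
  have h' : 0 < b - a := sub_pos.2 h
  have : 0 < (b - a) * (a ^ 2 + a * b + b ^ 2 + 2) := by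
    apply mul_pos h'
    nlinarith [sq_nonneg (a + b), sq_nonneg a, sq_nonneg b]
  simp only
  nlinarith

lemma cubic_surjective : Function.Surjective (fun s : ℝ => s ^ 3 + 2 * s) := by
  apply Continuous.surjective (by fun_prop)
  · apply tendsto_atTop_mono' _ _ tendsto_id
    filter_upwards [eventually_ge_atTop 0] with s hs
    have : 0 ≤ s ^ 3 := by positivity
    simp only [id]
    linarith
  · apply tendsto_atBot_mono' _ _ tendsto_id
    filter_upwards [eventually_le_atBot 0] with s hs
    have : 0 ≤ (-s) ^ 3 := pow_nonneg (by linarith) 3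
    simp only [id]
    nlinarith

/-- `sig τ` is the unique real root `σ` of `σ ^ 3 + 2 σ = τ`. -/
def sig (τ : ℝ) : ℝ :=
  (StrictMono.orderIsoOfSurjective _ cubic_strictMono cubic_surjective).symm τ

lemma sig_spec (τ : ℝ) : sig τ ^ 3 + 2 * sig τ = τ :=
  (StrictMono.orderIsoOfSurjective _ cubic_strictMono cubic_surjective).apply_symm_apply τ

lemma continuous_sig : Continuous sig :=
  (StrictMono.orderIsoOfSurjective _ cubic_strictMono cubic_surjective).symm.continuous

lemma sig_pos {τ : ℝ} (h : 0 < τ) : 0 < sig τ := by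
  by_contra! hs
  have : 0 ≤ (-sig τ) ^ 3 := pow_nonneg (by linarith) 3
  nlinarith [sig_spec τ]

lemma hasDerivAt_sig (τ : ℝ) : HasDerivAt sig (3 * sig τ ^ 2 + 2)⁻¹ τ := by
  refine HasDerivAt.of_local_left_inverse (f := fun s : ℝ => s ^ 3 + 2 * s)
    continuous_sig.continuousAt ?_ (by positivity) (Eventually.of_forall sig_spec)
  have h := ((hasDerivAt_id (sig τ)).pow 3).add ((hasDerivAt_id (sig τ)).const_mul 2)
  refine h.congr_deriv ?_
  simp

/-- `kap τ = (1 + σ ^ 2) ^ (1 / 4)` with `σ = sig τ`. -/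
def kap (τ : ℝ) : ℝ := (1 + sig τ ^ 2) ^ ((1 : ℝ) / 4)

lemma kap_pos (τ : ℝ) : 0 < kap τ := by unfold kap; positivity

lemma kap_pow (τ : ℝ) : kap τ ^ 4 = 1 + sig τ ^ 2 := by
  unfold kap
  rw [← Real.rpow_natCast, ← Real.rpow_mul (by positivity)]
  norm_num

lemma one_le_kap (τ : ℝ) : 1 ≤ kap τ :=
  Real.one_le_rpow (by nlinarith [sq_nonneg (sig τ)]) (by norm_num)

lemma kap_le (τ : ℝ) : kap τ ≤ 1 + sig τ ^ 2 := by
  rw [← kap_pow]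
  exact le_self_pow₀ (one_le_kap τ) (by norm_num)

/-- Derivative of the profile `σ k`, in the form suggested by differentiating
`(σ k) ^ 4 = σ ^ 4 + σ ^ 6`. -/
lemma hasDerivAt_profile (τ : ℝ) :
    HasDerivAt (fun τ => sig τ * kap τ) (1 / (2 * kap τ ^ 3)) τ := by
  have hk : HasDerivAt kap (2 * sig τ * (3 * sig τ ^ 2 + 2)⁻¹ * (1 / (4 * kap τ ^ 3))) τ := by
    have h1 : HasDerivAt (fun τ => 1 + sig τ ^ 2) (2 * sig τ * (3 * sig τ ^ 2 + 2)⁻¹) τ := by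
      have := ((hasDerivAt_sig τ).pow 2).const_add 1
      refine this.congr_deriv ?_
      simp
    have h2 := h1.rpow_const (p := (1 : ℝ) / 4) (Or.inl (by positivity))
    refine h2.congr_deriv ?_
    have h3 : (1 + sig τ ^ 2) ^ ((1 : ℝ) / 4 - 1) = 1 / kap τ ^ 3 := by
      have hp : (0 : ℝ) < 1 + sig τ ^ 2 := by positivity
      have := kap_pos τ
      have h4 := kap_pow τ
      rw [Real.rpow_sub hp, Real.rpow_one]
      change kap τ / _ = _
      rw [← h4]
      field_simp
    rw [h3]
    have := kap_pos τ
    field_simp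
  refine ((hasDerivAt_sig τ).mul hk).congr_deriv ?_
  have := kap_pos τ
  field_simp
  linear_combination 8 * kap_pow τ

/-! ### The squared radius and its differential -/

/-- The squared horizontal radius `|x|² + |y|²`. -/
def RR (ξ : Hpt n) : ℝ := (∑ i, ξ.1 i ^ 2) + ∑ i, ξ.2.1 i ^ 2

/-- The differential of `RR` at `ξ`. -/
def RL (ξ : Hpt n) : Hpt n →L[ℝ] ℝ :=
  (∑ i, (2 * ξ.1 i) • ((ContinuousLinearMap.proj (R := ℝ) (φ := fun _ : Fin n => ℝ) i).comp
      (ContinuousLinearMap.fst ℝ (Fin n → ℝ) ((Fin n → ℝ) × ℝ)))) +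
  ∑ i, (2 * ξ.2.1 i) • ((ContinuousLinearMap.proj (R := ℝ) (φ := fun _ : Fin n => ℝ) i).comp
      ((ContinuousLinearMap.fst ℝ (Fin n → ℝ) ℝ).comp
        (ContinuousLinearMap.snd ℝ (Fin n → ℝ) ((Fin n → ℝ) × ℝ))))

/-- The coordinate `t` as a linear form. -/
def TL : Hpt n →L[ℝ] ℝ :=
  (ContinuousLinearMap.snd ℝ (Fin n → ℝ) ℝ).comp
    (ContinuousLinearMap.snd ℝ (Fin n → ℝ) ((Fin n → ℝ) × ℝ))

lemma hasFDerivAt_RR (ξ : Hpt n) : HasFDerivAt (RR (n := n)) (RL ξ) ξ := by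
  unfold RR RL
  apply HasFDerivAt.add
  · refine HasFDerivAt.fun_sum fun i _ => ?_
    have := ((ContinuousLinearMap.proj (R := ℝ) (φ := fun _ : Fin n => ℝ) i).comp
      (ContinuousLinearMap.fst ℝ (Fin n → ℝ) ((Fin n → ℝ) × ℝ))).hasFDerivAt (x := ξ)
    refine (this.pow 2).congr_fderiv ?_
    simp
  · refine HasFDerivAt.fun_sum fun i _ => ?_
    have := ((ContinuousLinearMap.proj (R := ℝ) (φ := fun _ : Fin n => ℝ) i).comp
      ((ContinuousLinearMap.fst ℝ (Fin n → ℝ) ℝ).comp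
        (ContinuousLinearMap.snd ℝ (Fin n → ℝ) ((Fin n → ℝ) × ℝ)))).hasFDerivAt (x := ξ)
    refine (this.pow 2).congr_fderiv ?_
    simp

/-! ### The minimisation over the plane -/

/-- The lower bound behind the formula for `d_N`: with `P ^ 2 ≤ S R`, the quantity minimised over
the plane is bounded below by its value at `S = R s ^ 2`, `P = -R s`. -/
lemma quartic_bound {R S P s : ℝ} (hR : 0 < R) (h : P ^ 2 ≤ S * R) :
    R ^ 2 * (s ^ 4 + s ^ 6) ≤ S ^ 2 + (R * (s ^ 3 + 2 * s) + 2 * P) ^ 2 := by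
  have h0 : 0 ≤ S - P ^ 2 / R := by rw [sub_nonneg, div_le_iff₀ hR]; exact h
  -- Tangent lines at the minimiser reduce the bound to squares plus the Cauchy–Schwarz gap.
  have key : S ^ 2 + (R * (s ^ 3 + 2 * s) + 2 * P) ^ 2 - R ^ 2 * (s ^ 4 + s ^ 6) =
      (S - R * s ^ 2) ^ 2 + (2 * R * s + 2 * P) ^ 2 + 2 * s ^ 2 * R * (S - P ^ 2 / R)
        + 2 * s ^ 2 * (P + R * s) ^ 2 := by
    field_simp
    ring
  have : 0 ≤ 2 * s ^ 2 * R * (S - P ^ 2 / R) := by positivity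
  nlinarith [sq_nonneg (S - R * s ^ 2), sq_nonneg (2 * R * s + 2 * P),
    mul_nonneg (sq_nonneg s) (sq_nonneg (P + R * s))]

lemma pairing_sq_le (x y u v : Fin n → ℝ) :
    (∑ i, (u i * y i - v i * x i)) ^ 2 ≤
      ((∑ i, u i ^ 2) + ∑ i, v i ^ 2) * ((∑ i, x i ^ 2) + ∑ i, y i ^ 2) := by
  have h := Finset.sum_mul_sq_le_sq_mul_sq (Finset.univ : Finset (Fin n ⊕ Fin n))
    (Sum.elim u v) (Sum.elim y (-x))
  simp only [Fintype.sum_sum_type, Sum.elim_inl, Sum.elim_inr, Pi.neg_apply, neg_sq] at h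
  rw [add_comm (∑ i, x i ^ 2)]
  have e : ∑ i, (u i * y i - v i * x i) = ∑ i, u i * y i + ∑ i, v i * -x i := by
    rw [← Finset.sum_add_distrib]
    exact Finset.sum_congr rfl fun i _ => by ring
  rw [e]
  exact h

/-- The gauge of `b⁻¹ ξ` for `b` in the plane, in terms of the horizontal displacement. -/
lemma gaugeN_translate (a b x y : Fin n → ℝ) (t : ℝ) :
    gaugeN (hmul (hinv ((a, b, 0) : Hpt n)) (x, y, t)) =
      (((∑ i, (x i - a i) ^ 2) + ∑ i, (y i - b i) ^ 2) ^ 2 +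
        (t + 2 * ∑ i, ((x i - a i) * y i - (y i - b i) * x i)) ^ 2) ^ ((1 : ℝ) / 4) := by
  unfold gaugeN hmul hinv
  simp only [Pi.add_apply, Pi.neg_apply, neg_zero, zero_add]
  have e1 : ∑ i, (-a i + x i) ^ 2 = ∑ i, (x i - a i) ^ 2 :=
    Finset.sum_congr rfl fun i _ => by ring
  have e2 : ∑ i, (-b i + y i) ^ 2 = ∑ i, (y i - b i) ^ 2 :=
    Finset.sum_congr rfl fun i _ => by ring
  have e3 : ∑ i, (-a i * y i - -b i * x i) =
      ∑ i, ((x i - a i) * y i - (y i - b i) * x i) :=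
    Finset.sum_congr rfl fun i _ => by ring
  rw [e1, e2, e3]

lemma quartic_root {R : ℝ} (hR : 0 < R) {τ : ℝ} (hτ : 0 < τ) :
    (R ^ 2 * (sig τ ^ 4 + sig τ ^ 6)) ^ ((1 : ℝ) / 4) = √R * (sig τ * kap τ) := by
  have h1 := sig_pos hτ
  have h2 := kap_pos τ
  have h : R ^ 2 * (sig τ ^ 4 + sig τ ^ 6) = (√R * (sig τ * kap τ)) ^ 4 := by
    have : √R ^ 4 = R ^ 2 := by
      rw [show √R ^ 4 = (√R ^ 2) ^ 2 by ring, Real.sq_sqrt hR.le]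
    rw [mul_pow, mul_pow, this, kap_pow]
    ring
  rw [h, ← Real.rpow_natCast, ← Real.rpow_mul (by positivity)]
  norm_num

lemma distN_eq (ξ : Hpt n) (hR : 0 < RR ξ) (ht : 0 < ξ.2.2) :
    distN {η : Hpt n | η.2.2 = 0} ξ =
      √(RR ξ) * (sig (ξ.2.2 / RR ξ) * kap (ξ.2.2 / RR ξ)) := by
  obtain ⟨x, y, t⟩ := ξ
  simp only at ht ⊢
  set R := RR ((x, y, t) : Hpt n) with hRdef
  have hRe : R = (∑ i, x i ^ 2) + ∑ i, y i ^ 2 := rfl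
  have hs := sig_spec (t / R)
  rw [← quartic_root hR (div_pos ht hR)]
  set s := sig (t / R)
  have hts : t = R * (s ^ 3 + 2 * s) := by rw [hs]; field_simp
  have hlow : ∀ b : {η : Hpt n | η.2.2 = 0}, (R ^ 2 * (s ^ 4 + s ^ 6)) ^ ((1 : ℝ) / 4) ≤
      gaugeN (hmul (hinv (b : Hpt n)) (x, y, t)) := by
    rintro ⟨⟨a, b, c⟩, hc⟩
    change c = 0 at hc
    subst hc
    rw [gaugeN_translate]
    refine Real.rpow_le_rpow (by positivity) ?_ (by norm_num)
    conv_rhs => rw [hts]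
    apply quartic_bound hR
    rw [hRe]
    exact pairing_sq_le x y (fun i => x i - a i) (fun i => y i - b i)
  have : Nonempty {η : Hpt n | η.2.2 = 0} := ⟨⟨(0, 0, 0), rfl⟩⟩
  apply le_antisymm
  · -- The nearest point of the plane is `(x + s y, y - s x, 0)`.
    refine (ciInf_le ⟨_, forall_mem_range.2 hlow⟩
      ⟨(fun i => x i + s * y i, fun i => y i - s * x i, 0), rfl⟩).trans (le_of_eq ?_)
    simp only
    rw [gaugeN_translate]
    have e1 : (∑ i, (x i - (x i + s * y i)) ^ 2) + ∑ i, (y i - (y i - s * x i)) ^ 2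
        = s ^ 2 * R := by
      rw [hRe, ← Finset.sum_add_distrib, ← Finset.sum_add_distrib, Finset.mul_sum]
      exact Finset.sum_congr rfl fun i _ => by ring
    have e2 : ∑ i, ((x i - (x i + s * y i)) * y i - (y i - (y i - s * x i)) * x i)
        = -s * R := by
      rw [hRe, ← Finset.sum_add_distrib, Finset.mul_sum]
      exact Finset.sum_congr rfl fun i _ => by ring
    rw [e1, e2]
    congr 1
    rw [hts]
    ring
  · exact le_ciInf hlow

/-! ### The horizontal gradient -/

/-- The differential of `d_N`, split into its radial part (along `dR`) and its `t` part. -/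
lemma hasFDerivAt_distN (ξ : Hpt n) (hR : 0 < RR ξ) (ht : 0 < ξ.2.2) :
    HasFDerivAt (distN {η : Hpt n | η.2.2 = 0})
      ((-sig (ξ.2.2 / RR ξ) / (2 * √(RR ξ) * kap (ξ.2.2 / RR ξ) ^ 3)) • RL ξ +
        (1 / (2 * √(RR ξ) * kap (ξ.2.2 / RR ξ) ^ 3)) • TL) ξ := by
  have hRd := hasFDerivAt_RR ξ
  have hT : HasFDerivAt (fun η : Hpt n => η.2.2) TL ξ := (TL (n := n)).hasFDerivAt
  have hev : (distN {η : Hpt n | η.2.2 = 0}) =ᶠ[nhds ξ] fun η =>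
      √(RR η) * (sig (η.2.2 / RR η) * kap (η.2.2 / RR η)) := by
    filter_upwards [hRd.continuousAt.eventually (lt_mem_nhds hR),
      hT.continuousAt.eventually (lt_mem_nhds ht)] with η h1 h2
    exact distN_eq η h1 h2
  refine HasFDerivAt.congr_of_eventuallyEq ?_ hev
  have hinv : HasFDerivAt (fun η : Hpt n => (RR η)⁻¹) ((-(RR ξ ^ 2)⁻¹) • RL ξ) ξ :=
    (hasDerivAt_inv hR.ne').comp_hasFDerivAt ξ hRd
  have hq : HasFDerivAt (fun η : Hpt n => η.2.2 / RR η)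
      (ξ.2.2 • -(RR ξ ^ 2)⁻¹ • RL ξ + (RR ξ)⁻¹ • TL) ξ := by
    simp only [div_eq_mul_inv]
    exact hT.mul hinv
  have hprof := (hasDerivAt_profile (ξ.2.2 / RR ξ)).comp_hasFDerivAt ξ hq
  have hall := (hRd.sqrt hR.ne').mul hprof
  refine hall.congr_fderiv ?_
  refine ContinuousLinearMap.ext fun v => ?_
  simp only [Function.comp_apply, add_apply, smul_apply, smul_eq_mul]
  have hk := kap_pos (ξ.2.2 / RR ξ)
  have hk4 := kap_pow (ξ.2.2 / RR ξ)
  have hs := sig_spec (ξ.2.2 / RR ξ)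
  set s := sig (ξ.2.2 / RR ξ)
  set k := kap (ξ.2.2 / RR ξ)
  have hts : ξ.2.2 = RR ξ * (s ^ 3 + 2 * s) := by rw [hs]; field_simp
  rw [hts]
  obtain ⟨q, hq0, hqR⟩ : ∃ q : ℝ, 0 < q ∧ RR ξ = q ^ 2 :=
    ⟨√(RR ξ), Real.sqrt_pos.2 hR, (Real.sq_sqrt hR.le).symm⟩
  rw [hqR, Real.sqrt_sq hq0.le]
  field_simp
  linear_combination (s * RL ξ v) * hk4

lemma RL_X (ξ : Hpt n) (i : Fin n) (c : ℝ) :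
    RL ξ ((Pi.single i 1, 0, c) : Hpt n) = 2 * ξ.1 i := by
  simp [RL, Pi.single_apply]

lemma RL_Y (ξ : Hpt n) (i : Fin n) (c : ℝ) :
    RL ξ ((0, Pi.single i 1, c) : Hpt n) = 2 * ξ.2.1 i := by
  simp [RL, Pi.single_apply]

/-- The horizontal gradient of `d_N` has norm exactly `1 / k`. -/
lemma hgradNorm_eq (ξ : Hpt n) (hR : 0 < RR ξ) (ht : 0 < ξ.2.2) :
    hgradNorm (distN {η : Hpt n | η.2.2 = 0}) ξ = 1 / kap (ξ.2.2 / RR ξ) := by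
  unfold hgradNorm XD YD
  rw [(hasFDerivAt_distN ξ hR ht).fderiv]
  simp only [add_apply, smul_apply, smul_eq_mul, RL_X, RL_Y]
  have hk := kap_pos (ξ.2.2 / RR ξ)
  have hk4 := kap_pow (ξ.2.2 / RR ξ)
  have hsq := Real.sq_sqrt hR.le
  have hq0 := Real.sqrt_pos.2 hR
  set s := sig (ξ.2.2 / RR ξ)
  set k := kap (ξ.2.2 / RR ξ)
  set q := √(RR ξ)
  have hsum : ∑ i, ((-s / (2 * q * k ^ 3) * (2 * ξ.1 i) +
        1 / (2 * q * k ^ 3) * TL ((Pi.single i 1, 0, 2 * ξ.2.1 i) : Hpt n)) ^ 2 +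
      (-s / (2 * q * k ^ 3) * (2 * ξ.2.1 i) +
        1 / (2 * q * k ^ 3) * TL ((0, Pi.single i 1, -(2 * ξ.1 i)) : Hpt n)) ^ 2)
      = (1 + s ^ 2) / (q ^ 2 * k ^ 6) * RR ξ := by
    rw [RR, ← Finset.sum_add_distrib, Finset.mul_sum]
    refine Finset.sum_congr rfl fun i _ => ?_
    simp only [TL, ContinuousLinearMap.comp_apply, ContinuousLinearMap.coe_snd']
    field_simp
    ring
  rw [hsum, ← hsq, ← hk4]
  have : k ^ 4 / (q ^ 2 * k ^ 6) * q ^ 2 = (1 / k) ^ 2 := by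
    field_simp
  rw [this, Real.sqrt_sq (by positivity)]

end Heis

open Heis in
/-- asymptotics of the gauge pseudodistance to ∂Π₀ and of its horizontal
gradient, as t → 0⁺ for fixed r ≠ 0. -/
theorem dN_asymptotics (n : ℕ) (hn : 1 ≤ n) (x y : Fin n → ℝ)
    (hr : Real.sqrt ((∑ i, x i ^ 2) + ∑ i, y i ^ 2) ≠ 0) :
    ∃ C : ℝ, 0 < C ∧ ∃ δ : ℝ, 0 < δ ∧ ∀ t : ℝ, 0 < t → t < δ →
      |distN {η : Hpt n | η.2.2 = 0} ((x, y, t) : Hpt n) -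
          t / (2 * Real.sqrt ((∑ i, x i ^ 2) + ∑ i, y i ^ 2))| ≤ C * t ^ 3 ∧
      |hgradNorm (distN {η : Hpt n | η.2.2 = 0}) ((x, y, t) : Hpt n) - 1| ≤ C * t ^ 2 := by
  have hR : 0 < (∑ i, x i ^ 2) + ∑ i, y i ^ 2 :=
    Real.sqrt_pos.1 (hr.symm.lt_of_le (Real.sqrt_nonneg _))
  set R := (∑ i, x i ^ 2) + ∑ i, y i ^ 2 with hRdef
  refine ⟨√R / R ^ 3 + 1 / R ^ 2, by positivity, 1, one_pos, fun t ht _ => ?_⟩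
  have hRR : RR ((x, y, t) : Hpt n) = R := rfl
  have hτ : 0 < t / R := div_pos ht hR
  rw [distN_eq (x, y, t) hR ht, hgradNorm_eq (x, y, t) hR ht, hRR]
  simp only
  have hs0 := sig_pos hτ
  have hs := sig_spec (t / R)
  have hk1 := one_le_kap (t / R)
  have hk2 := kap_le (t / R)
  have htR : t = R * (t / R) := by field_simp
  set τ := t / R
  set s := sig τ
  set k := kap τ
  have hsτ : s ≤ τ := by nlinarith [pow_pos hs0 3]
  have hq := Real.sq_sqrt hR.le
  have hq0 := Real.sqrt_pos.2 hR
  constructor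
  · have e : √R * (s * k) - t / (2 * √R) = √R * (s * (k - 1) - s ^ 3 / 2) := by
      have : t / (2 * √R) = √R * (τ / 2) := by
        rw [div_eq_iff (by positivity)]
        linear_combination htR - τ * hq
      rw [this, ← hs]
      ring
    have b : |s * (k - 1) - s ^ 3 / 2| ≤ s ^ 3 := by
      rw [abs_le]
      constructor <;> nlinarith [pow_pos hs0 3, mul_nonneg hs0.le (sub_nonneg.2 hk1),
        mul_le_mul_of_nonneg_left hk2 hs0.le]
    rw [e, abs_mul, abs_of_pos hq0]
    calc √R * |s * (k - 1) - s ^ 3 / 2| ≤ √R * τ ^ 3 := by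
          gcongr
          exact b.trans (by gcongr)
      _ = √R / R ^ 3 * t ^ 3 := by rw [htR]; field_simp
      _ ≤ (√R / R ^ 3 + 1 / R ^ 2) * t ^ 3 := by
          gcongr
          exact le_add_of_nonneg_right (by positivity)
  · have b : |1 / k - 1| ≤ s ^ 2 := by
      have hk0 : 0 < k := by linarith
      have h1 : 1 / k ≤ 1 := by rw [div_le_one hk0]; exact hk1
      have h2 : 2 - k ≤ 1 / k := by rw [le_div_iff₀ hk0]; nlinarith [sq_nonneg (k - 1)]
      rw [abs_le]
      constructor <;> nlinarith [sq_nonneg s]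
    calc |1 / k - 1| ≤ τ ^ 2 := b.trans (by gcongr)
      _ = 1 / R ^ 2 * t ^ 2 := by rw [htR]; field_simp
      _ ≤ (√R / R ^ 3 + 1 / R ^ 2) * t ^ 2 := by
          gcongr
          exact le_add_of_nonneg_left (by positivity)
end
end
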